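/- Let Ω ⊂ ℝ² be a compact convex set of positive measure and let Q ⊂ (0,∞) be a uniformly discrete set. Then the union of concentric circles P = Q𝕋 = ⋃_{q∈Q} {x ∈ ℝ² : |x| = q} is a sampling set for B_Ω if and only if Diam(Ω) < d⁻(Q), where Diam(Ω) = sup{|x − y| : x, y ∈ Ω}. -/

import Mathlib

open MeasureTheory FourierTransform Filter Metric
open scoped Pointwise RealInnerProductSpace ENNReal NNReal

noncomputable section

variable {V : Type*} [NormedAddCommGroup V] [InnerProductSpace ℝ V]
  [FiniteDimensional ℝ V] [MeasurableSpace V] [BorelSpace V]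

/-- `f` belongs to the Bernstein space `B_Ω`: it is a continuous bounded function which is the
inverse Fourier transform of a tempered distribution supported in `Ω`, i.e. its distributional
Fourier transform annihilates every test function whose support is disjoint from `Ω`. -/
def MemBernstein (Ω : Set V) (f : V → ℂ) : Prop :=
  Continuous f ∧ (∃ C, ∀ x, ‖f x‖ ≤ C) ∧
    ∀ ψ : V → ℂ, ContDiff ℝ (⊤ : ℕ∞) ψ → HasCompactSupport ψ → tsupport ψ ∩ Ω = ∅ →
      ∫ x, f x * 𝓕 ψ x = 0

/-- `P` is a sampling set for the Bernstein space `B_Ω`: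
`‖f‖_∞ ≤ C · sup_{x ∈ P} ‖f x‖` for all `f ∈ B_Ω`. -/
def IsSamplingSet (Ω P : Set V) : Prop :=
  ∃ C > 0, ∀ f : V → ℂ, MemBernstein Ω f →
    ∀ x : V, ‖f x‖ ≤ C * sSup ((fun p => ‖f p‖) '' P)

/-- A set is uniformly discrete if distinct points are separated by a fixed positive distance. -/
def UniformlyDiscrete {X : Type*} [PseudoMetricSpace X] (Λ : Set X) : Prop :=
  ∃ δ > 0, ∀ x ∈ Λ, ∀ y ∈ Λ, x ≠ y → δ ≤ dist x y

/-- The lower uniform (Beurling) density of a set: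
`D⁻(Λ) = lim_{r→∞} inf_x #(Λ ∩ B_r(x)) / |B_r(x)|`. -/
def lowerUniformDensity {X : Type*} [NormedAddCommGroup X] [MeasureSpace X] (Λ : Set X) : ℝ :=
  liminf (fun r : ℝ => ⨅ x : X,
    (Nat.card ↥(Λ ∩ closedBall x r) : ℝ) / (volume (closedBall x r)).toReal) atTop

/-!
Let `f ∈ B_Ω` with `‖f‖ ≤ 1` and `‖f x‖ ≥ 1/2`. The line through `0` and `x` meets the spheres in a
copy of `Q ∪ -Q`, and on it the product of `f` with a kernel of small spectrum extends to an entire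
function of exponential type barely above `π diam Ω`. If `diam Ω` is less than the density of
`Q ∪ -Q`, this function is not small on all of `Q ∪ -Q`: after subtraction of a Lagrange
interpolant it would have more zeros in a large disc than Jensen's formula allows.

Conversely, if the density is at most `diam Ω`, arbitrarily far from the origin there are long
intervals in which `Q` is sparse. By linear algebra some combination of cardinal functions is large
inside such an interval and small on `Q`; as a function of `⟪x, u⟫`, with `u` in the direction of a
diameter of `Ω`, its spectrum lies close to that diameter. Far out the spheres are nearly flat,
so the product with a kernel is small on all of them, and its spectrum is close to `Ω`. Translates
of such functions converge locally uniformly to a function in `B_Ω`. Because the convergence is only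
local, the limit is replaced by a function in `B_Ω` that vanishes at infinity, has the same value
at `0` and is nowhere much larger; a translate of it is small on the spheres, but not at the point
to which `0` is moved.
-/

section ConcentricSpheres

open Real Complex Topology

lemma contDiff_fourierChar_inner {W : Type*} [NormedAddCommGroup W] [InnerProductSpace ℝ W]
    (x : W) : ContDiff ℝ (⊤ : ℕ∞) fun v : W => (𝐞 ⟪v, x⟫ : ℂ) := by
  simp only [Real.fourierChar_apply]
  exact ((Complex.ofRealCLM.contDiff.comp
    (contDiff_const.mul (contDiff_id.inner ℝ contDiff_const))).mul contDiff_const).cexp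

section BernsteinOperations

variable {Ω Ω' : Set V} {f : V → ℂ} {ψ : V → ℂ}

lemma integrable_fourier_of_hasCompactSupport (hψ : ContDiff ℝ (⊤ : ℕ∞) ψ)
    (hψc : HasCompactSupport ψ) : Integrable (𝓕 ψ) := by
  simpa only [SchwartzMap.fourier_coe] using
    (𝓕 (hψc.toSchwartzMap hψ)).integrable (μ := volume)

lemma fourierInv_fourier_of_hasCompactSupport (hψ : ContDiff ℝ (⊤ : ℕ∞) ψ)
    (hψc : HasCompactSupport ψ) : 𝓕⁻ (𝓕 ψ) = ψ :=
  hψ.continuous.fourierInv_fourier_eq (hψ.continuous.integrable_of_hasCompactSupport hψc)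
    (integrable_fourier_of_hasCompactSupport hψ hψc)

namespace MemBernstein

lemma integrable_mul (hf : MemBernstein Ω f) {g : V → ℂ} (hg : Integrable g) :
    Integrable fun x => f x * g x := by
  obtain ⟨C, hC⟩ := hf.2.1
  exact hg.bdd_mul (c := C) hf.1.aestronglyMeasurable (Eventually.of_forall hC)

lemma mono (hf : MemBernstein Ω f) (hΩ : Ω ⊆ Ω') : MemBernstein Ω' f :=
  ⟨hf.1, hf.2.1, fun ψ hψ hψc hψΩ => hf.2.2 ψ hψ hψc
    (Set.subset_empty_iff.1 ((Set.inter_subset_inter_right _ hΩ).trans hψΩ.subset))⟩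

protected lemma zero (Ω : Set V) : MemBernstein Ω fun _ => 0 :=
  ⟨continuous_const, ⟨0, fun _ => norm_zero.le⟩, fun _ _ _ _ => by simp⟩

lemma const_mul (hf : MemBernstein Ω f) (c : ℂ) : MemBernstein Ω fun x => c * f x := by
  obtain ⟨hcont, ⟨C, hC⟩, hspec⟩ := hf
  refine ⟨continuous_const.mul hcont, ⟨‖c‖ * C, fun x => ?_⟩, fun ψ hψ hψc hψΩ => ?_⟩
  · rw [norm_mul]
    exact mul_le_mul_of_nonneg_left (hC x) (norm_nonneg c)
  · simp_rw [mul_assoc]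
    rw [integral_const_mul, hspec ψ hψ hψc hψΩ, mul_zero]

lemma add {g : V → ℂ} (hf : MemBernstein Ω f) (hg : MemBernstein Ω g) :
    MemBernstein Ω fun x => f x + g x := by
  refine ⟨hf.1.add hg.1, ?_, fun ψ hψ hψc hψΩ => ?_⟩
  · obtain ⟨C, hC⟩ := hf.2.1
    obtain ⟨D, hD⟩ := hg.2.1
    exact ⟨C + D, fun x => (norm_add_le _ _).trans (add_le_add (hC x) (hD x))⟩
  · have hψi := integrable_fourier_of_hasCompactSupport hψ hψc
    simp_rw [add_mul]
    rw [integral_add (hf.integrable_mul hψi) (hg.integrable_mul hψi),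
      hf.2.2 ψ hψ hψc hψΩ, hg.2.2 ψ hψ hψc hψΩ, add_zero]

lemma comp_add_right (hf : MemBernstein Ω f) (x₀ : V) : MemBernstein Ω fun x => f (x + x₀) := by
  refine ⟨hf.1.comp (continuous_id.add continuous_const),
    hf.2.1.imp fun C hC x => hC (x + x₀), fun ψ hψ hψc hψΩ => ?_⟩
  set ψ' : V → ℂ := fun v => 𝐞 ⟪v, x₀⟫ * ψ v
  have h𝓕 (x : V) : 𝓕 ψ x = 𝓕 ψ' (x + x₀) := by
    simp only [Real.fourier_eq, ψ', Circle.smul_def, smul_eq_mul, ← mul_assoc, ← Circle.coe_mul,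
      ← AddChar.map_add_eq_mul, inner_add_right, neg_add, neg_add_cancel_right]
  simp_rw [h𝓕]
  rw [integral_add_right_eq_self fun x => f x * 𝓕 ψ' x]
  exact hf.2.2 ψ' ((contDiff_fourierChar_inner x₀).mul hψ) hψc.mul_left
    (Set.subset_empty_iff.1
      ((Set.inter_subset_inter_left _ tsupport_mul_subset_right).trans hψΩ.subset))

lemma modulate (hf : MemBernstein Ω f) (η : V) :
    MemBernstein (η +ᵥ Ω) fun x => 𝐞 ⟪x, η⟫ • f x := by
  refine ⟨(contDiff_fourierChar_inner η).continuous.mul hf.1,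
    hf.2.1.imp fun C hC x => (Circle.norm_smul _ _).trans_le (hC x), fun ψ hψ hψc hψΩ => ?_⟩
  have h𝓕 (x : V) : 𝐞 ⟪x, η⟫ • f x * 𝓕 ψ x = f x * 𝓕 (fun v => ψ (v + η)) x := by
    have : 𝓕 (fun v => ψ (v + η)) x = 𝐞 ⟪η, x⟫ • 𝓕 ψ x :=
      congrFun (VectorFourier.fourierIntegral_comp_add_right 𝐞 volume (innerₗ V) ψ η) x
    rw [this, real_inner_comm x η, smul_mul_assoc, mul_smul_comm]
  simp_rw [h𝓕]
  refine hf.2.2 _ (hψ.comp (contDiff_id.add contDiff_const))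
    (hψc.comp_homeomorph (Homeomorph.addRight η)) (Set.eq_empty_iff_forall_notMem.2 ?_)
  rintro ξ ⟨hξ, hξΩ⟩
  refine Set.eq_empty_iff_forall_notMem.1 hψΩ (ξ + η)
    ⟨tsupport_comp_subset_preimage ψ (f := (· + η)) (by fun_prop) hξ, ?_⟩
  simpa only [vadd_eq_add, add_comm] using Set.vadd_mem_vadd_set (a := η) hξΩ

lemma comp_smul (hf : MemBernstein Ω f) {ρ : ℝ} (hρ : ρ ≠ 0) :
    MemBernstein (ρ • Ω) fun x => f (ρ • x) := by
  refine ⟨hf.1.comp (continuous_const_smul ρ), hf.2.1.imp fun C hC x => hC (ρ • x),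
    fun ψ hψ hψc hψΩ => ?_⟩
  have h𝓕 (x : V) : 𝓕 (fun v => ψ (ρ • v)) (ρ • x)
      = |(ρ ^ Module.finrank ℝ V)⁻¹| • 𝓕 ψ x := by
    rw [Real.fourier_eq, Real.fourier_eq, ← Measure.integral_comp_smul volume _ ρ]
    simp only [inner_smul_left, inner_smul_right, conj_trivial]
  have hzero : ∫ x, f x * 𝓕 (fun v => ψ (ρ • v)) x = 0 := by
    refine hf.2.2 _ (hψ.comp (contDiff_const_smul ρ)) (hψc.comp_smul hρ)
      (Set.eq_empty_iff_forall_notMem.2 fun ξ ⟨hξ, hξΩ⟩ => ?_)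
    exact Set.eq_empty_iff_forall_notMem.1 hψΩ (ρ • ξ)
      ⟨tsupport_comp_subset_preimage ψ (f := (ρ • ·)) (by fun_prop) hξ,
        Set.smul_mem_smul_set hξΩ⟩
  have hscale := Measure.integral_comp_smul volume
    (fun x => f x * 𝓕 (fun v => ψ (ρ • v)) x) ρ
  simp_rw [hzero, smul_zero, h𝓕, mul_smul_comm, integral_smul] at hscale
  exact (smul_eq_zero.1 hscale).resolve_left (abs_ne_zero.2 (inv_ne_zero (pow_ne_zero _ hρ)))

lemma mul_integral_fourierChar {ι : Type*} [MeasurableSpace ι] {μ : Measure ι} [SFinite μ]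
    {β : ι → ℂ} {η : ι → V} (hf : MemBernstein Ω f) (hβ : Integrable β μ) (hη : Measurable η)
    (hΩ : ∀ᵐ θ ∂μ, β θ ≠ 0 → η θ +ᵥ Ω ⊆ Ω') :
    MemBernstein Ω' fun x => f x * ∫ θ, 𝐞 ⟪x, η θ⟫ • β θ ∂μ := by
  have hmeas (x : V) : AEStronglyMeasurable (fun θ => 𝐞 ⟪x, η θ⟫ • β θ) μ := by
    have : Measurable fun θ => (𝐞 ⟪x, η θ⟫ : ℂ) := by fun_prop
    exact this.aestronglyMeasurable.mul hβ.1
  refine ⟨hf.1.mul (continuous_of_dominated hmeas (bound := fun θ => ‖β θ‖)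
    (fun x => .of_forall fun θ => (Circle.norm_smul _ _).le) hβ.norm
    (.of_forall fun θ => by fun_prop)), ?_, fun ψ hψ hψc hψΩ => ?_⟩
  · obtain ⟨C, hC⟩ := hf.2.1
    refine ⟨C * ∫ θ, ‖β θ‖ ∂μ, fun x => ?_⟩
    rw [norm_mul]
    refine mul_le_mul (hC x) ((norm_integral_le_integral_norm _).trans_eq ?_) (norm_nonneg _)
      ((norm_nonneg _).trans (hC x))
    simp only [Circle.norm_smul]
  · have hint : Integrable (fun p : V × ι => 𝐞 ⟪p.1, η p.2⟫ • ((f p.1 * 𝓕 ψ p.1) * β p.2))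
        (volume.prod μ) := by
      refine ((hf.integrable_mul (integrable_fourier_of_hasCompactSupport hψ hψc)).mul_prod
        hβ).bdd_mul (c := 1) (f := fun p : V × ι => (𝐞 ⟪p.1, η p.2⟫ : ℂ)) ?_
        (.of_forall fun p => (Circle.norm_coe _).le)
      have : Measurable fun p : V × ι => (𝐞 ⟪p.1, η p.2⟫ : ℂ) := by fun_prop
      exact this.aestronglyMeasurable
    calc ∫ x, f x * (∫ θ, 𝐞 ⟪x, η θ⟫ • β θ ∂μ) * 𝓕 ψ x
        = ∫ x, ∫ θ, 𝐞 ⟪x, η θ⟫ • ((f x * 𝓕 ψ x) * β θ) ∂μ := by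
          refine integral_congr_ae (.of_forall fun x => ?_)
          simp only [mul_right_comm _ _ (𝓕 ψ x), ← mul_smul_comm, integral_const_mul]
      _ = ∫ θ, (∫ x, 𝐞 ⟪x, η θ⟫ • ((f x * 𝓕 ψ x) * β θ)) ∂μ := integral_integral_swap hint
      _ = ∫ θ, (∫ x, 𝐞 ⟪x, η θ⟫ • f x * 𝓕 ψ x) * β θ ∂μ := by
          simp only [← integral_mul_const, smul_mul_assoc]
      _ = 0 := integral_eq_zero_of_ae (hΩ.mono fun θ hθ => by
          rcases eq_or_ne (β θ) 0 with h | h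
          · simp [h]
          · simp [((hf.modulate (η θ)).mono (hθ h)).2.2 ψ hψ hψc hψΩ])

end MemBernstein

lemma memBernstein_one (h0 : (0 : V) ∈ Ω) : MemBernstein Ω fun _ => 1 := by
  refine ⟨continuous_const, ⟨1, fun x => norm_one.le⟩, fun ψ hψ hψc hψΩ => ?_⟩
  have hinv := congrFun (fourierInv_fourier_of_hasCompactSupport hψ hψc) 0
  simp only [Real.fourierInv_eq, inner_zero_right, AddChar.map_zero_eq_one, one_smul] at hinv
  simp only [one_mul, hinv]
  by_contra hne
  exact Set.eq_empty_iff_forall_notMem.1 hψΩ 0 ⟨subset_tsupport ψ hne, h0⟩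

lemma memBernstein_fourierInv {K : Set V} {β : V → ℂ} (hβ : Integrable β)
    (hβK : Function.support β ⊆ K) : MemBernstein K (𝓕⁻ β) := by
  have h := (memBernstein_one (Set.mem_singleton (0 : V))).mul_integral_fourierChar hβ
    measurable_id (Ω' := K) (.of_forall fun θ hθ => by simpa using hβK hθ)
  convert h using 2 with x
  simp only [one_mul, id_eq, Real.fourierInv_eq, real_inner_comm x]

lemma integral_fourierChar_eq_sinc (t : ℝ) :
    ∫ θ in (-1 : ℝ)..1, (𝐞 (θ * t) : ℂ) = 2 * sinc (2 * π * t) := by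
  rcases eq_or_ne t 0 with rfl | ht
  · norm_num
  · have hc : 2 * π * t ≠ 0 := by positivity
    have hsub := intervalIntegral.integral_comp_mul_left (a := -1) (b := 1)
      (fun u : ℝ => cexp (u * I)) hc
    rw [mul_neg_one, mul_one, integral_exp_mul_I_eq_sinc] at hsub
    simp only [mul_assoc (2 * π) t, mul_comm t] at hsub
    simp only [Real.fourierChar_apply]
    have hc' : ((2 * π * t : ℝ) : ℂ) ≠ 0 := mod_cast hc
    rw [hsub, Complex.real_smul, Complex.ofReal_inv]
    field_simp

lemma MemBernstein.mul_sinc (hf : MemBernstein Ω f) (w : V) :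
    MemBernstein (Ω + segment ℝ (-w) w) fun x => f x * (sinc (2 * π * ⟪x, w⟫) : ℝ) := by
  have h := hf.mul_integral_fourierChar (μ := volume.restrict (Set.Ioc (-1 : ℝ) 1))
    (integrable_const (2⁻¹ : ℂ)) (η := fun θ => θ • w) (by fun_prop)
    (Ω' := Ω + segment ℝ (-w) w) ?_
  · convert h using 3 with x
    have hsinc := integral_fourierChar_eq_sinc ⟪x, w⟫
    rw [intervalIntegral.integral_of_le (by norm_num)] at hsinc
    simp only [inner_smul_right, Circle.smul_def, smul_eq_mul]
    rw [integral_mul_const, hsinc]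
    ring
  · filter_upwards [ae_restrict_mem measurableSet_Ioc] with θ hθ
    rintro - _ ⟨ξ, hξ, rfl⟩
    refine ⟨ξ, hξ, θ • w, ⟨(1 - θ) / 2, (1 + θ) / 2, by linarith [hθ.2], by linarith [hθ.1],
      by ring, ?_⟩, add_comm ξ _⟩
    module

end BernsteinOperations

section FourierInversion

variable {K Ω : Set V} {f F : V → ℂ}

namespace MemBernstein

lemma fourier_eq_zero (hF : MemBernstein K F) (hFi : Integrable F) (hK : IsClosed K)
    {ξ : V} (hξ : ξ ∉ K) : 𝓕 F ξ = 0 := by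
  have hcont : Continuous (𝓕 F) :=
    VectorFourier.fourierIntegral_continuous Real.continuous_fourierChar continuous_inner hFi
  have hae : ∀ᵐ x, x ∈ Kᶜ → 𝓕 F x = 0 := by
    refine hK.isOpen_compl.ae_eq_zero_of_integral_contDiff_smul_eq_zero
      (hcont.locallyIntegrable.locallyIntegrableOn _) fun g hg hgc hgK => ?_
    have hself := VectorFourier.integral_fourierIntegral_smul_eq_flip (L := innerₗ V)
      Real.continuous_fourierChar continuous_inner hFi
      ((Complex.continuous_ofReal.comp hg.continuous).integrable_of_hasCompactSupport
        (hgc.comp_left Complex.ofReal_zero) : Integrable fun x => (g x : ℂ))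
    rw [flip_innerₗ] at hself
    calc ∫ x, g x • 𝓕 F x = ∫ x, 𝓕 F x • (g x : ℂ) := by
          simp only [Complex.real_smul, smul_eq_mul, mul_comm]
      _ = ∫ x, F x * 𝓕 (fun x => (g x : ℂ)) x := hself
      _ = 0 := hF.2.2 _ (Complex.ofRealCLM.contDiff.comp hg)
        (hgc.comp_left Complex.ofReal_zero) ?_
    exact (Set.subset_compl_iff_disjoint_right.1
      ((tsupport_comp_subset Complex.ofReal_zero g).trans hgK)).inter_eq
  exact Measure.eqOn_open_of_ae_eq (g := fun _ => 0)
    ((ae_restrict_iff' hK.measurableSet.compl).2 hae) hK.isOpen_compl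
    hcont.continuousOn continuousOn_const hξ

lemma integrable_fourier (hF : MemBernstein K F) (hFi : Integrable F) (hK : IsCompact K) :
    Integrable (𝓕 F) :=
  (VectorFourier.fourierIntegral_continuous Real.continuous_fourierChar continuous_inner
    hFi).integrable_of_hasCompactSupport
      (HasCompactSupport.intro hK fun _ => hF.fourier_eq_zero hFi hK.isClosed)

lemma eq_integral_fourier (hF : MemBernstein K F) (hFi : Integrable F) (hK : IsCompact K)
    (x : V) : F x = ∫ ξ, 𝐞 ⟪x, ξ⟫ • 𝓕 F ξ := by
  have hinv := congrFun (hF.1.fourierInv_fourier_eq hFi (hF.integrable_fourier hFi hK)) x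
  simp only [← hinv, Real.fourierInv_eq, real_inner_comm x]

lemma integral_norm_fourier_le (hF : MemBernstein K F) (hFi : Integrable F) (hK : IsCompact K) :
    ∫ ξ, ‖𝓕 F ξ‖ ≤ volume.real K * ∫ x, ‖F x‖ := by
  rw [← setIntegral_eq_integral_of_forall_compl_eq_zero (s := K) fun ξ hξ => by
    rw [hF.fourier_eq_zero hFi hK.isClosed hξ, norm_zero]]
  calc ∫ ξ in K, ‖𝓕 F ξ‖ ≤ ∫ ξ in K, ∫ x, ‖F x‖ :=
        setIntegral_mono (hF.integrable_fourier hFi hK).norm.integrableOn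
          (integrableOn_const hK.measure_lt_top.ne)
          (VectorFourier.norm_fourierIntegral_le_integral_norm _ _ _ F)
    _ = volume.real K * ∫ x, ‖F x‖ := by rw [setIntegral_const, smul_eq_mul]

lemma mul {g : V → ℂ} (hf : MemBernstein Ω f) (hg : MemBernstein K g) (hgi : Integrable g)
    (hK : IsCompact K) : MemBernstein (Ω + K) fun x => f x * g x := by
  simp_rw [hg.eq_integral_fourier hgi hK]
  refine hf.mul_integral_fourierChar (hg.integrable_fourier hgi hK) measurable_id
    (.of_forall fun ξ hξ => ?_)
  have hξK : ξ ∈ K := by_contra fun h => hξ (hg.fourier_eq_zero hgi hK.isClosed h)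
  rintro _ ⟨ζ, hζ, rfl⟩
  exact ⟨ζ, hζ, ξ, hξK, add_comm ζ ξ⟩

end MemBernstein

lemma norm_fourierChar_sub_le (s t : ℝ) : ‖(𝐞 s : ℂ) - 𝐞 t‖ ≤ 2 * π * |s - t| := by
  have : (𝐞 s : ℂ) - 𝐞 t = 𝐞 t * (cexp (I * ↑(2 * π * (s - t))) - 1) := by
    simp only [Real.fourierChar_apply, mul_sub, ← Complex.exp_add, mul_one]
    congr 2
    push_cast
    ring
  rw [this, norm_mul, Circle.norm_coe, one_mul]
  refine Real.norm_exp_I_mul_ofReal_sub_one_le.trans_eq ?_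
  rw [Real.norm_eq_abs, abs_mul, abs_of_pos two_pi_pos]

lemma MemBernstein.norm_sub_le (hF : MemBernstein K F) (hFi : Integrable F) (hK : IsCompact K)
    {B : ℝ} (hB : ∀ ξ ∈ K, ‖ξ‖ ≤ B) (x y : V) :
    ‖F x - F y‖ ≤ 2 * π * B * ‖x - y‖ * ∫ ξ, ‖𝓕 F ξ‖ := by
  have hint (z : V) : Integrable fun ξ => 𝐞 ⟪z, ξ⟫ • 𝓕 F ξ :=
    (hF.integrable_fourier hFi hK).bdd_mul (c := 1)
      (by fun_prop : Continuous fun ξ => (𝐞 ⟪z, ξ⟫ : ℂ)).aestronglyMeasurable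
      (.of_forall fun ξ => (Circle.norm_coe _).le)
  have hpt (ξ : V) : ‖𝐞 ⟪x, ξ⟫ • 𝓕 F ξ - 𝐞 ⟪y, ξ⟫ • 𝓕 F ξ‖
      ≤ 2 * π * B * ‖x - y‖ * ‖𝓕 F ξ‖ := by
    by_cases hξ : ξ ∈ K
    · rw [Circle.smul_def, Circle.smul_def, ← sub_smul, norm_smul]
      refine mul_le_mul_of_nonneg_right ((norm_fourierChar_sub_le _ _).trans ?_) (norm_nonneg _)
      rw [← inner_sub_left, mul_assoc (2 * π), mul_comm B]
      gcongr
      exact (abs_real_inner_le_norm _ _).trans (by gcongr; exact hB ξ hξ)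
    · simp [hF.fourier_eq_zero hFi hK.isClosed hξ]
  rw [hF.eq_integral_fourier hFi hK x, hF.eq_integral_fourier hFi hK y,
    ← integral_sub (hint x) (hint y), ← integral_const_mul]
  exact norm_integral_le_of_norm_le ((hF.integrable_fourier hFi hK).norm.const_mul _)
    (.of_forall hpt)

end FourierInversion

section Kernel

variable (V) in
lemma exists_schwartz_memBernstein_closedBall {δ : ℝ} (hδ : 0 < δ) :
    ∃ κ : SchwartzMap V ℂ, MemBernstein (closedBall 0 δ) κ ∧ κ 0 = 1 ∧ ∀ x, ‖κ x‖ ≤ 1 := by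
  let b : ContDiffBump (0 : V) := ⟨δ / 2, δ, by positivity, by linarith⟩
  let β : V → ℂ := fun v => (b.normed volume v : ℝ)
  have hsupp : Function.support β ⊆ closedBall 0 δ := by
    refine subset_trans (fun v hv => ?_) (ball_subset_closedBall (x := (0 : V)) (ε := δ))
    have : v ∈ Function.support (b.normed volume) := by simpa [β] using hv
    rwa [b.support_normed_eq] at this
  have hβc : HasCompactSupport β := HasCompactSupport.of_support_subset_isCompact
    (isCompact_closedBall 0 δ) hsupp
  have hβ : ContDiff ℝ (⊤ : ℕ∞) β := Complex.ofRealCLM.contDiff.comp b.contDiff_normed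
  have hβi : Integrable β := hβ.continuous.integrable_of_hasCompactSupport hβc
  let κ : SchwartzMap V ℂ := 𝓕⁻ (hβc.toSchwartzMap hβ)
  have hκ : ⇑κ = 𝓕⁻ β := SchwartzMap.fourierInv_coe _
  refine ⟨κ, hκ ▸ memBernstein_fourierInv hβi hsupp, ?_, fun x => ?_⟩
  · rw [hκ, Real.fourierInv_eq]
    simp only [inner_zero_right, AddChar.map_zero_eq_one, one_smul, β]
    rw [integral_complex_ofReal, b.integral_normed, ofReal_one]
  · rw [hκ, Real.fourierInv_eq]
    refine (norm_integral_le_integral_norm _).trans_eq ?_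
    simp only [Circle.norm_smul, β, norm_real, Real.norm_of_nonneg (b.nonneg_normed _)]
    exact b.integral_normed

end Kernel

section UnitBall

variable {Ω Ω' : Set V} {f : V → ℂ}

/-- The closed unit ball of the Bernstein space `B_Ω`, as a set of functions. -/
def bernsteinUnitBall (Ω : Set V) : Set (V → ℂ) := {f | MemBernstein Ω f ∧ ∀ x, ‖f x‖ ≤ 1}

lemma comp_add_right_mem_bernsteinUnitBall (hf : f ∈ bernsteinUnitBall Ω) (x₀ : V) :
    (fun x => f (x + x₀)) ∈ bernsteinUnitBall Ω :=
  ⟨hf.1.comp_add_right x₀, fun x => hf.2 (x + x₀)⟩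

lemma bernsteinUnitBall_mono (hΩ : Ω ⊆ Ω') : bernsteinUnitBall Ω ⊆ bernsteinUnitBall Ω' :=
  fun _ hf => ⟨hf.1.mono hΩ, hf.2⟩

variable {κ : SchwartzMap V ℂ} {δ : ℝ}

lemma memBernstein_mul_kernel (hΩ : IsCompact Ω) (hδ : 0 ≤ δ) (hf : MemBernstein Ω f)
    (hκ : MemBernstein (closedBall 0 δ) κ) (x₀ : V) :
    MemBernstein (cthickening δ Ω) fun x => f x * κ (x - x₀) := by
  rw [← hΩ.add_closedBall_zero hδ]
  simpa only [sub_eq_add_neg] using hf.mul (hκ.comp_add_right (-x₀))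
    (κ.integrable.comp_add_right (-x₀)) (isCompact_closedBall 0 δ)

lemma integrable_mul_kernel (hf : MemBernstein Ω f) (κ : SchwartzMap V ℂ) (x₀ : V) :
    Integrable fun x => f x * κ (x - x₀) :=
  hf.integrable_mul (κ.integrable.comp_sub_right x₀)

lemma integral_norm_fourier_mul_kernel_le (hΩ : IsCompact Ω) (hδ : 0 ≤ δ)
    (hf : f ∈ bernsteinUnitBall Ω) (hκ : MemBernstein (closedBall 0 δ) κ) (x₀ : V) :
    ∫ ξ, ‖𝓕 (fun x => f x * κ (x - x₀)) ξ‖ ≤ volume.real (cthickening δ Ω) * ∫ x, ‖κ x‖ := by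
  refine ((memBernstein_mul_kernel hΩ hδ hf.1 hκ x₀).integral_norm_fourier_le
    (integrable_mul_kernel hf.1 κ x₀) hΩ.cthickening).trans ?_
  rw [← integral_sub_right_eq_self (fun x => ‖κ x‖) x₀]
  refine mul_le_mul_of_nonneg_left (integral_mono_of_nonneg (.of_forall fun _ => norm_nonneg _)
    (κ.integrable.comp_sub_right x₀).norm (.of_forall fun x => ?_)) measureReal_nonneg
  exact (norm_mul _ _).trans_le (mul_le_of_le_one_left (norm_nonneg _) (hf.2 x))

lemma exists_modulus_bernsteinUnitBall (hΩ : IsCompact Ω) {ε : ℝ} (hε : 0 < ε) :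
    ∃ r > 0, ∀ f ∈ bernsteinUnitBall Ω, ∀ x y, dist x y < r → dist (f x) (f y) < ε := by
  obtain ⟨κ, hκ, hκ0, -⟩ := exists_schwartz_memBernstein_closedBall V one_pos
  obtain ⟨B, hB0, hB⟩ := (hΩ.cthickening (r := 1)).isBounded.exists_pos_norm_le
  set A := 2 * π * B * (volume.real (cthickening 1 Ω) * ∫ x, ‖κ x‖)
  obtain ⟨r, hr, hsmall⟩ : ∃ r > 0, ∀ v : V, ‖v‖ < r → ‖κ v - 1‖ + A * ‖v‖ < ε := by
    have hlim : Tendsto (fun v : V => ‖κ v - 1‖ + A * ‖v‖) (𝓝 0) (𝓝 0) := by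
      have : Continuous fun v : V => ‖κ v - 1‖ + A * ‖v‖ :=
        (κ.continuous.sub continuous_const).norm.add (continuous_const.mul continuous_norm)
      simpa [hκ0] using this.tendsto 0
    obtain ⟨r, hr, h⟩ := Metric.eventually_nhds_iff.1 (hlim.eventually_lt_const hε)
    exact ⟨r, hr, fun v hv => h (by rwa [dist_zero_right])⟩
  refine ⟨r, hr, fun f hf x y hxy => ?_⟩
  have hlip : ‖f x * κ (x - y) - f y‖ ≤ A * ‖x - y‖ := by
    have h := (memBernstein_mul_kernel hΩ zero_le_one hf.1 hκ y).norm_sub_le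
      (integrable_mul_kernel hf.1 κ y) hΩ.cthickening hB x y
    rw [sub_self, hκ0, mul_one] at h
    calc _ ≤ _ := h
      _ ≤ 2 * π * B * ‖x - y‖ * (volume.real (cthickening 1 Ω) * ∫ x, ‖κ x‖) := by
        gcongr
        exact integral_norm_fourier_mul_kernel_le hΩ zero_le_one hf hκ y
      _ = A * ‖x - y‖ := by ring
  calc dist (f x) (f y) ≤ ‖f x - f x * κ (x - y)‖ + ‖f x * κ (x - y) - f y‖ :=
        (dist_eq_norm _ _).trans_le (norm_sub_le_norm_sub_add_norm_sub _ _ _)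
    _ ≤ ‖κ (x - y) - 1‖ + A * ‖x - y‖ := by
        refine add_le_add ?_ hlip
        rw [← mul_one_sub, norm_mul, norm_sub_rev]
        exact mul_le_of_le_one_left (norm_nonneg _) (hf.2 x)
    _ < ε := hsmall _ (by rwa [← dist_eq_norm])

end UnitBall

section Sampling

variable {Ω P : Set V}

lemma isSamplingSet_iff : IsSamplingSet Ω P ↔ ∃ ε > 0, ∀ f ∈ bernsteinUnitBall Ω,
    (∃ x, 1 / 2 ≤ ‖f x‖) → ∃ p ∈ P, ε ≤ ‖f p‖ := by
  constructor
  · rintro ⟨C, hC, h⟩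
    refine ⟨1 / (4 * C), by positivity, fun f hf ⟨x, hx⟩ => ?_⟩
    by_contra! hsmall
    have hsup : sSup ((fun p => ‖f p‖) '' P) ≤ 1 / (4 * C) :=
      Real.sSup_le (by rintro _ ⟨p, hp, rfl⟩; exact (hsmall p hp).le) (by positivity)
    have := calc 1 / 2 ≤ ‖f x‖ := hx
      _ ≤ C * sSup ((fun p => ‖f p‖) '' P) := h f hf.1 x
      _ ≤ C * (1 / (4 * C)) := by gcongr
      _ = 1 / 4 := by field_simp
    norm_num at this
  · rintro ⟨ε, hε, h⟩
    refine ⟨ε⁻¹, inv_pos.2 hε, fun f hf x => ?_⟩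
    obtain ⟨B, hB⟩ := hf.2.1
    have hbdd : BddAbove (Set.range fun y => ‖f y‖) := ⟨B, by rintro _ ⟨y, rfl⟩; exact hB y⟩
    set M := ⨆ y, ‖f y‖
    have hM (y : V) : ‖f y‖ ≤ M := le_ciSup hbdd y
    refine (hM x).trans ?_
    rcases ((norm_nonneg _).trans (hM x)).eq_or_lt with hM0 | hM0
    · rw [← hM0]
      exact mul_nonneg (inv_nonneg.2 hε.le)
        (Real.sSup_nonneg (by rintro _ ⟨p, -, rfl⟩; exact norm_nonneg _))
    have hnorm (y : V) : ‖(M : ℂ)⁻¹ * f y‖ = ‖f y‖ / M := by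
      rw [norm_mul, norm_inv, Complex.norm_of_nonneg hM0.le, inv_mul_eq_div]
    obtain ⟨y, hy⟩ := exists_lt_of_lt_ciSup (half_lt_self hM0)
    obtain ⟨p, hp, hfp⟩ := h (fun y => (M : ℂ)⁻¹ * f y)
      ⟨hf.const_mul _, fun y => hnorm y ▸ div_le_one_of_le₀ (hM y) hM0.le⟩
      ⟨y, by rw [hnorm, le_div_iff₀ hM0]; linarith⟩
    rw [hnorm, le_div_iff₀ hM0] at hfp
    rw [le_inv_mul_iff₀ hε]
    exact hfp.trans (le_csSup (hbdd.mono (Set.image_subset_range _ P)) ⟨p, hp, rfl⟩)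

end Sampling

lemma circleAverage_abs_im_sub (c : ℂ) (R : ℝ) :
    circleAverage (fun z : ℂ => |(z - c).im|) c R = 2 * |R| / π := by
  have h_first : ∫ θ in (0 : ℝ)..π, |Real.sin θ| = 2 := by
    rw [intervalIntegral.integral_congr (g := Real.sin), integral_sin, Real.cos_zero, Real.cos_pi]
    · norm_num
    · intro θ hθ
      rw [Set.uIcc_of_le pi_pos.le] at hθ
      exact abs_of_nonneg (Real.sin_nonneg_of_mem_Icc hθ)
  have h_second : ∫ θ in π..2 * π, |Real.sin θ| = 2 := by
    have h := intervalIntegral.integral_comp_add_right (a := 0) (b := π) (|Real.sin ·|) π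
    simp only [Real.sin_add_pi, abs_neg, zero_add] at h
    rw [two_mul, ← h, h_first]
  have h_im (θ : ℝ) : |(circleMap c R θ - c).im| = |R| * |Real.sin θ| := by
    rw [← abs_mul]
    simp [circleMap]
  simp_rw [circleAverage, h_im]
  rw [intervalIntegral.integral_const_mul, ← intervalIntegral.integral_add_adjacent_intervals
    (b := π) (Continuous.intervalIntegrable (by fun_prop) _ _)
    (Continuous.intervalIntegrable (by fun_prop) _ _), h_first, h_second, smul_eq_mul]
  field_simp
  ring

lemma circleAverage_log_norm_le {g : ℂ → ℂ} {c : ℂ} {R A τ : ℝ} (hR : 0 ≤ R)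
    (hg : MeromorphicOn g (sphere c R)) (hA : 1 ≤ A) (hτ : 0 ≤ τ)
    (hb : ∀ z ∈ sphere c R, ‖g z‖ ≤ A * Real.exp (τ * |(z - c).im|)) :
    circleAverage (Real.log ‖g ·‖) c R ≤ Real.log A + 2 * τ * R / π := by
  rw [← abs_of_nonneg hR] at hg
  have h_bound (z : ℂ) (hz : z ∈ sphere c R) :
      Real.log ‖g z‖ ≤ Real.log A + τ • |(z - c).im| := by
    rcases eq_or_ne (g z) 0 with h | h
    · rw [h, norm_zero, Real.log_zero]
      exact add_nonneg (Real.log_nonneg hA) (by positivity)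
    · rw [smul_eq_mul, ← Real.log_exp (τ * |(z - c).im|),
        ← Real.log_mul (by positivity) (by positivity)]
      exact Real.log_le_log (norm_pos_iff.2 h) (hb z hz)
  have h_int : CircleIntegrable (fun z : ℂ => τ • |(z - c).im|) c R :=
    (Continuous.continuousOn (by fun_prop)).circleIntegrable hR
  calc circleAverage (Real.log ‖g ·‖) c R
      ≤ circleAverage (fun z => Real.log A + τ • |(z - c).im|) c R :=
        circleAverage_mono (MeromorphicOn.circleIntegrable_log_norm hg)
          ((circleIntegrable_const _ _ _).add h_int)
          (fun z hz => h_bound z (by rwa [abs_of_nonneg hR] at hz))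
    _ = Real.log A + 2 * τ * R / π := by
        rw [circleAverage_fun_add (circleIntegrable_const _ _ _) h_int, circleAverage_const,
          circleAverage_fun_smul, circleAverage_abs_im_sub, abs_of_nonneg hR, smul_eq_mul]
        ring

lemma one_le_divisor_of_eq_zero {g : ℂ → ℂ} {U : Set ℂ} {c u : ℂ} (hg : AnalyticOnNhd ℂ g U)
    (hU : IsPreconnected U) (hc : c ∈ U) (hgc : g c ≠ 0) (hu : u ∈ U) (hgu : g u = 0) :
    1 ≤ MeromorphicOn.divisor g U u := by
  have h_ne_top : analyticOrderAt g u ≠ ⊤ :=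
    hg.analyticOrderAt_ne_top_of_isPreconnected hU hc hu
      (by simp [(hg c hc).analyticOrderAt_eq_zero.2 hgc])
  have h_ne_zero : analyticOrderAt g u ≠ 0 := fun h => (hg u hu).analyticOrderAt_eq_zero.1 h hgu
  rw [MeromorphicOn.AnalyticOnNhd.divisor_apply hg hu]
  obtain ⟨n, hn⟩ := ENat.ne_top_iff_exists.1 h_ne_top
  rw [← hn] at h_ne_zero ⊢
  exact Int.natCast_pos.2 (Nat.pos_of_ne_zero (by simpa using h_ne_zero))

lemma sum_log_div_add_log_norm_le_circleAverage {g : ℂ → ℂ} {c : ℂ} {R : ℝ} (hR : 0 < R)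
    (hg : AnalyticOnNhd ℂ g (closedBall c R)) (hgc : g c ≠ 0) {S : Finset ℂ}
    (hS : ∀ u ∈ S, u ∈ closedBall c R ∧ g u = 0) :
    ∑ u ∈ S, Real.log (R / ‖u - c‖) + Real.log ‖g c‖ ≤ circleAverage (Real.log ‖g ·‖) c R := by
  set D := MeromorphicOn.divisor g (closedBall c R)
  have h_jensen := AnalyticOnNhd.circleAverage_log_norm hR.ne' (by rwa [abs_of_pos hR]) hgc
  rw [abs_of_pos hR] at h_jensen
  simp only [norm_sub_rev c, ← div_eq_mul_inv] at h_jensen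
  have hD_fin : D.support.Finite := D.finiteSupport (isCompact_closedBall c R)
  have hD_nonneg : 0 ≤ D := MeromorphicOn.AnalyticOnNhd.divisor_nonneg hg
  have hD_one (u : ℂ) (hu : u ∈ S) : 1 ≤ D u :=
    one_le_divisor_of_eq_zero hg (convex_closedBall c R).isPreconnected
      (mem_closedBall_self hR.le) hgc (hS u hu).1 (hS u hu).2
  have h_log (u : ℂ) (hu : u ∈ closedBall c R) : 0 ≤ Real.log (R / ‖u - c‖) := by
    rcases eq_or_ne u c with rfl | hne
    · simp
    · refine Real.log_nonneg ?_
      rwa [one_le_div (norm_sub_pos_iff.2 hne), ← dist_eq_norm]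
  rw [h_jensen, finsum_eq_sum_of_support_subset (s := hD_fin.toFinset)]
  · gcongr
    refine (Finset.sum_le_sum fun u hu => ?_).trans
      (Finset.sum_le_sum_of_subset_of_nonneg (s := S) ?_ ?_)
    · exact le_mul_of_one_le_left (h_log u (hS u hu).1) (by exact_mod_cast hD_one u hu)
    · intro u hu
      rw [Set.Finite.mem_toFinset, Function.mem_support]
      exact (zero_lt_one.trans_le (hD_one u hu)).ne'
    · intro u hu _
      rw [Set.Finite.mem_toFinset] at hu
      exact mul_nonneg (by exact_mod_cast hD_nonneg u) (h_log u (D.supportWithinDomain hu))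
  · intro u hu
    rw [Set.Finite.coe_toFinset]
    exact fun h => hu (by simp [D, show D u = 0 from h])

lemma integral_indicator_Ici_inv {r₀ R t : ℝ} (hr₀ : 0 < r₀) (hR : r₀ ≤ R) (htR : t ≤ R) :
    ∫ r in r₀..R, (Set.Ici t).indicator (fun r => r⁻¹) r = Real.log (R / max r₀ t) := by
  have hm : 0 < max r₀ t := lt_max_of_lt_left hr₀
  have hmR : max r₀ t ≤ R := max_le hR htR
  rw [intervalIntegral.integral_of_le hR, setIntegral_indicator measurableSet_Ici,
    setIntegral_congr_set ((ae_eq_refl _).inter Ioi_ae_eq_Ici.symm), Set.Ioc_inter_Ioi,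
    ← intervalIntegral.integral_of_le hmR, integral_inv_of_pos hm (hm.trans_le hmR)]

lemma mul_sub_le_sum_log_div {ι : Type*} {S : Finset ι} {ρ : ι → ℝ} {r₀ R c : ℝ} (hr₀ : 0 < r₀)
    (hR : r₀ ≤ R) (hρ : ∀ i ∈ S, 0 < ρ i ∧ ρ i ≤ R)
    (hc : ∀ r, r₀ ≤ r → r ≤ R → c * r ≤ {i ∈ S | ρ i ≤ r}.card) :
    c * (R - r₀) ≤ ∑ i ∈ S, Real.log (R / ρ i) := by
  have h_inv : IntervalIntegrable (fun r : ℝ => r⁻¹) volume r₀ R :=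
    intervalIntegrable_inv_iff.2
      (.inr fun h => hr₀.not_ge (by rw [Set.uIcc_of_le hR] at h; exact h.1))
  have h_int (i : ι) :
      IntervalIntegrable ((Set.Ici (ρ i)).indicator fun r : ℝ => r⁻¹) volume r₀ R := by
    rw [intervalIntegrable_iff] at h_inv ⊢
    exact h_inv.indicator measurableSet_Ici
  have h_count {r : ℝ} (hr : r ∈ Set.Icc r₀ R) :
      c ≤ ∑ i ∈ S, (Set.Ici (ρ i)).indicator (fun r => r⁻¹) r := by
    simp only [Set.indicator_apply, Set.mem_Ici]
    rw [← Finset.sum_filter, Finset.sum_const, nsmul_eq_mul, ← div_eq_mul_inv,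
      le_div_iff₀ (hr₀.trans_le hr.1)]
    exact hc r hr.1 hr.2
  calc c * (R - r₀) = ∫ _ in r₀..R, c := by
        rw [intervalIntegral.integral_const, smul_eq_mul, mul_comm]
    _ ≤ ∫ r in r₀..R, ∑ i ∈ S, (Set.Ici (ρ i)).indicator (fun r => r⁻¹) r :=
        intervalIntegral.integral_mono_on hR intervalIntegrable_const
          (by simpa only [Finset.sum_fn] using IntervalIntegrable.sum S fun i _ => h_int i)
          fun r hr => h_count hr
    _ = ∑ i ∈ S, Real.log (R / max r₀ (ρ i)) := by
        rw [intervalIntegral.integral_finsetSum fun i _ => h_int i]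
        exact Finset.sum_congr rfl fun i hi =>
          integral_indicator_Ici_inv hr₀ hR (hρ i hi).2
    _ ≤ ∑ i ∈ S, Real.log (R / ρ i) := by
        refine Finset.sum_le_sum fun i hi => ?_
        have := (hρ i hi).1
        have : 0 < R := hr₀.trans_le hR
        exact Real.log_le_log (by positivity) (by gcongr; exact le_max_right _ _)

lemma norm_eval_lagrange_basis_le {K : Type*} [NormedField K] [DecidableEq K] {S : Finset K}
    {c z t : K} {R δ : ℝ} (hδ : 0 < δ) (hδR : δ ≤ 2 * R) (hS : ∀ u ∈ S, u ∈ closedBall c R)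
    (hsep : ∀ x ∈ S, ∀ y ∈ S, x ≠ y → δ ≤ dist x y) (ht : t ∈ S) (hz : z ∈ closedBall c R) :
    ‖(Lagrange.basis S id t).eval z‖ ≤ (2 * R / δ) ^ S.card := by
  rw [Lagrange.basis, Polynomial.eval_prod, norm_prod]
  calc ∏ u ∈ S.erase t, ‖(Lagrange.basisDivisor (id t) (id u)).eval z‖
      ≤ ∏ u ∈ S.erase t, (2 * R / δ) := by
        refine Finset.prod_le_prod (fun _ _ => norm_nonneg _) fun u hu => ?_
        obtain ⟨hut, huS⟩ := Finset.mem_erase.1 hu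
        simp only [id, Lagrange.basisDivisor, Polynomial.eval_mul, Polynomial.eval_C,
          Polynomial.eval_sub, Polynomial.eval_X, norm_mul, norm_inv, ← dist_eq_norm]
        rw [mul_comm, ← div_eq_mul_inv]
        refine div_le_div₀ (hδ.le.trans hδR) ?_ hδ (hsep t ht u huS hut.symm)
        rw [two_mul]
        exact (dist_triangle_right _ _ _).trans (add_le_add hz (hS u huS))
    _ = (2 * R / δ) ^ (S.erase t).card := Finset.prod_const _
    _ ≤ (2 * R / δ) ^ S.card :=
        pow_le_pow_right₀ ((one_le_div hδ).2 hδR) (Finset.card_le_card (Finset.erase_subset _ _))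

lemma norm_eval_lagrange_interpolate_le {K : Type*} [NormedField K] [DecidableEq K] {S : Finset K}
    {c z : K} {R δ s : ℝ} {F : K → K} (hδ : 0 < δ) (hδR : δ ≤ 2 * R)
    (hS : ∀ u ∈ S, u ∈ closedBall c R) (hsep : ∀ x ∈ S, ∀ y ∈ S, x ≠ y → δ ≤ dist x y)
    (hF : ∀ t ∈ S, ‖F t‖ ≤ s) (hz : z ∈ closedBall c R) :
    ‖(Lagrange.interpolate S id F).eval z‖ ≤ S.card * (2 * R / δ) ^ S.card * s := by
  rw [Lagrange.interpolate_apply, Polynomial.eval_finsetSum, mul_assoc, ← nsmul_eq_mul,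
    ← Finset.sum_const]
  refine norm_sum_le_of_le _ fun t ht => ?_
  rw [Polynomial.eval_mul, Polynomial.eval_C, norm_mul, mul_comm]
  exact mul_le_mul (norm_eval_lagrange_basis_le hδ hδR hS hsep ht hz) (hF t ht) (norm_nonneg _)
    (pow_nonneg (div_nonneg (hδ.le.trans hδR) hδ.le) _)

section Density

variable {Λ : Set ℝ} {δ : ℝ}

lemma injOn_floor_div_of_separated (hδ : 0 < δ) (hΛ : ∀ x ∈ Λ, ∀ y ∈ Λ, x ≠ y → δ ≤ dist x y) :
    Set.InjOn (fun x : ℝ => ⌊x / δ⌋) Λ := by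
  intro x hx y hy hxy
  by_contra hne
  have h := Int.abs_sub_lt_one_of_floor_eq_floor hxy
  rw [← sub_div, abs_div, abs_of_pos hδ, div_lt_one hδ] at h
  exact h.not_ge (hΛ x hx y hy hne)

lemma image_floor_div_Icc_subset (hδ : 0 < δ) (s : Set ℝ) (a b : ℝ) :
    (fun x : ℝ => ⌊x / δ⌋) '' (s ∩ Set.Icc a b) ⊆ Finset.Icc ⌊a / δ⌋ ⌊b / δ⌋ := by
  rintro _ ⟨x, hx, rfl⟩
  exact Finset.mem_coe.2 (Finset.mem_Icc.2
    ⟨Int.floor_mono (div_le_div_of_nonneg_right hx.2.1 hδ.le),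
      Int.floor_mono (div_le_div_of_nonneg_right hx.2.2 hδ.le)⟩)

lemma UniformlyDiscrete.finite_inter_Icc (hΛ : UniformlyDiscrete Λ) (a b : ℝ) :
    (Λ ∩ Set.Icc a b).Finite := by
  obtain ⟨δ, hδ, hsep⟩ := hΛ
  exact .of_finite_image ((Finset.finite_toSet _).subset (image_floor_div_Icc_subset hδ Λ a b))
    ((injOn_floor_div_of_separated hδ hsep).mono Set.inter_subset_left)

lemma UniformlyDiscrete.exists_card_inter_closedBall_le (hΛ : UniformlyDiscrete Λ) :
    ∃ C, ∀ x r, 1 ≤ r → (Nat.card ↥(Λ ∩ closedBall x r) : ℝ) ≤ C * r := by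
  obtain ⟨δ, hδ, hsep⟩ := hΛ
  refine ⟨2 / δ + 2, fun x r hr => ?_⟩
  rw [Real.closedBall_eq_Icc, Nat.card_coe_set_eq, ← ((injOn_floor_div_of_separated hδ hsep).mono
    Set.inter_subset_left).ncard_image]
  have h_card := Set.ncard_le_ncard (image_floor_div_Icc_subset hδ Λ (x - r) (x + r))
  rw [Set.ncard_coe_finset, Int.card_Icc] at h_card
  refine (Nat.cast_le.2 h_card).trans ?_
  have h_nonneg : 0 ≤ ⌊(x + r) / δ⌋ + 1 - ⌊(x - r) / δ⌋ := by
    have := Int.floor_mono (div_le_div_of_nonneg_right (by linarith : x - r ≤ x + r) hδ.le)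
    linarith
  calc ((⌊(x + r) / δ⌋ + 1 - ⌊(x - r) / δ⌋).toNat : ℝ)
      = ⌊(x + r) / δ⌋ + 1 - ⌊(x - r) / δ⌋ := by
        exact_mod_cast congrArg (Int.cast (R := ℝ)) (Int.toNat_of_nonneg h_nonneg)
    _ ≤ (x + r) / δ + 1 - ((x - r) / δ - 1) := by
        gcongr
        · exact Int.floor_le _
        · exact (Int.sub_one_lt_floor _).le
    _ = 2 / δ * r + 2 := by ring
    _ ≤ (2 / δ + 2) * r := by linarith

lemma eventually_mul_volume_closedBall_le_card {X : Type*} [NormedAddCommGroup X] [MeasureSpace X]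
    {Λ : Set X} {σ : ℝ} (h : σ < lowerUniformDensity Λ) :
    ∀ᶠ r in atTop, ∀ x, σ * volume.real (closedBall x r) ≤ Nat.card ↥(Λ ∩ closedBall x r) := by
  have h_bdd (r : ℝ) : BddBelow (Set.range fun x : X =>
      (Nat.card ↥(Λ ∩ closedBall x r) : ℝ) / (volume (closedBall x r)).toReal) :=
    ⟨0, by rintro _ ⟨x, rfl⟩; positivity⟩
  have h_eventually := eventually_lt_of_lt_liminf h
    ⟨0, eventually_map.2 (.of_forall fun r => Real.iInf_nonneg fun x => by positivity)⟩
  filter_upwards [h_eventually] with r hr x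
  rcases (measureReal_nonneg (μ := volume) (s := closedBall x r)).eq_or_lt with h0 | hpos
  · rw [← h0, mul_zero]
    positivity
  · exact (le_div_iff₀ hpos).1 (hr.le.trans (ciInf_le (h_bdd r) x))

lemma UniformlyDiscrete.le_lowerUniformDensity (hΛ : UniformlyDiscrete Λ) {a : ℝ}
    (h : ∀ᶠ r in atTop, ∀ x, a * (2 * r) ≤ (Λ ∩ Set.Icc (x - r) (x + r)).ncard) :
    a ≤ lowerUniformDensity Λ := by
  obtain ⟨C, hC⟩ := hΛ.exists_card_inter_closedBall_le
  have h_vol (x : ℝ) {r : ℝ} (hr : 0 < r) : (volume (closedBall x r)).toReal = 2 * r := by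
    rw [Real.volume_closedBall, ENNReal.toReal_ofReal (by positivity)]
  refine le_liminf_of_le (IsBoundedUnder.isCoboundedUnder_ge ⟨C / 2, ?_⟩) ?_
  · rw [eventually_map]
    filter_upwards [eventually_ge_atTop 1] with r hr
    have hr0 : 0 < r := zero_lt_one.trans_le hr
    refine (ciInf_le ⟨0, by rintro _ ⟨x, rfl⟩; positivity⟩ 0).trans ?_
    rw [h_vol _ hr0, div_le_iff₀ (by positivity)]
    linarith [hC 0 r hr]
  · filter_upwards [h, eventually_gt_atTop 0] with r hr hr0
    refine le_ciInf fun x => ?_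
    rw [h_vol _ hr0, le_div_iff₀ (by positivity), Real.closedBall_eq_Icc, Nat.card_coe_set_eq]
    exact hr x

lemma UniformlyDiscrete.lowerUniformDensity_nonneg (hΛ : UniformlyDiscrete Λ) :
    0 ≤ lowerUniformDensity Λ :=
  hΛ.le_lowerUniformDensity (.of_forall fun _ _ => by simp)

lemma UniformlyDiscrete.exists_pos_forall_le {Q : Set ℝ} (hQ : UniformlyDiscrete Q)
    (hQpos : Q ⊆ Set.Ioi 0) : ∃ β > 0, ∀ q ∈ Q, β ≤ q := by
  obtain ⟨δ, hδ, hsep⟩ := hQ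
  by_cases! h : ∃ q₀ ∈ Q, q₀ < δ
  · obtain ⟨q₀, hq₀, hq₀δ⟩ := h
    refine ⟨q₀, hQpos hq₀, fun q hq => ?_⟩
    by_contra! hlt
    have h_dist := hsep q₀ hq₀ q hq hlt.ne'
    have hq_pos : 0 < q := hQpos hq
    rw [Real.dist_eq, abs_of_pos (sub_pos.2 hlt)] at h_dist
    linarith
  · exact ⟨δ, hδ, h⟩

lemma UniformlyDiscrete.union_neg {Q : Set ℝ} (hQ : UniformlyDiscrete Q)
    (hQpos : Q ⊆ Set.Ioi 0) : UniformlyDiscrete (Q ∪ -Q) := by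
  obtain ⟨β, hβ, hβQ⟩ := hQ.exists_pos_forall_le hQpos
  obtain ⟨δ, hδ, hsep⟩ := hQ
  have h_mixed {x y : ℝ} (hx : x ∈ Q) (hy : -y ∈ Q) : 2 * β ≤ dist x y :=
    le_trans (by linarith [hβQ x hx, hβQ (-y) hy]) (le_abs_self _)
  refine ⟨min δ (2 * β), by positivity, ?_⟩
  rintro x (hx | hx) y (hy | hy) hxy
  · exact (min_le_left _ _).trans (hsep x hx y hy hxy)
  · exact (min_le_right _ _).trans (h_mixed hx hy)
  · exact (min_le_right _ _).trans (dist_comm x y ▸ h_mixed hy hx)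
  · rw [← dist_neg_neg]
    exact (min_le_left _ _).trans (hsep _ hx _ hy (neg_injective.ne hxy))

end Density

/- Subtracting the Lagrange interpolant turns the points where `F` is small into zeros, to which
Jensen's formula applies. -/
lemma sum_log_div_le_of_norm_le_on {F : ℂ → ℂ} {S : Finset ℂ} {c : ℂ} {R δ s A τ : ℝ}
    (hδ : 0 < δ) (hδR : δ ≤ 2 * R) (hS : ∀ u ∈ S, u ∈ closedBall c R)
    (hsep : ∀ x ∈ S, ∀ y ∈ S, x ≠ y → δ ≤ dist x y) (hF : Differentiable ℂ F) (hA : 1 ≤ A)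
    (hτ : 0 ≤ τ) (hFA : ∀ z, ‖F z‖ ≤ A * Real.exp (τ * |(z - c).im|)) (hFc : 1 / 2 ≤ ‖F c‖)
    (hFS : ∀ u ∈ S, ‖F u‖ ≤ s) (hs : S.card * (2 * R / δ) ^ S.card * s ≤ 1 / 4) :
    (∀ u ∈ S, u ≠ c) ∧
      ∑ u ∈ S, Real.log (R / ‖u - c‖) ≤ Real.log (4 * A + 1) + 2 * τ * R / π := by
  classical
  have hR : 0 < R := by linarith
  set L : ℂ → ℂ := fun z => (Lagrange.interpolate S id F).eval z
  have hL_small (z : ℂ) (hz : z ∈ closedBall c R) : ‖L z‖ ≤ 1 / 4 :=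
    (norm_eval_lagrange_interpolate_le hδ hδR hS hsep hFS hz).trans hs
  have h_zero (u : ℂ) (hu : u ∈ S) : F u - L u = 0 :=
    sub_eq_zero.2 (Lagrange.eval_interpolate_at_node (v := id) F (Set.injOn_id _) hu).symm
  have h_diff : Differentiable ℂ fun z => F z - L z := hF.sub (Polynomial.differentiable _)
  have h_center : 1 / 4 ≤ ‖F c - L c‖ := by
    linarith [norm_sub_norm_le (F c) (L c), hL_small c (mem_closedBall_self hR.le)]
  have h_center_ne : F c - L c ≠ 0 := norm_pos_iff.1 (by linarith)
  refine ⟨fun u hu huc => h_center_ne (huc ▸ h_zero u hu), ?_⟩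
  have h_growth (z : ℂ) (hz : z ∈ sphere c R) :
      ‖F z - L z‖ ≤ (A + 1 / 4) * Real.exp (τ * |(z - c).im|) := by
    have h_exp : 1 ≤ Real.exp (τ * |(z - c).im|) := Real.one_le_exp (by positivity)
    linarith [norm_sub_le (F z) (L z), hFA z, hL_small z (sphere_subset_closedBall hz)]
  have h_jensen := (sum_log_div_add_log_norm_le_circleAverage hR
    (fun z _ => h_diff.analyticAt z) h_center_ne fun u hu => ⟨hS u hu, h_zero u hu⟩).trans
    (circleAverage_log_norm_le hR.le (fun z _ => (h_diff.analyticAt z).meromorphicAt)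
      (by linarith) hτ h_growth)
  have h_log : Real.log (4 * A + 1) = Real.log (A + 1 / 4) - Real.log (1 / 4) := by
    rw [← Real.log_div (by linarith) (by norm_num)]
    congr 1
    ring
  linarith [Real.log_le_log (by norm_num) h_center]

lemma mul_sub_le_of_norm_le_on {F : ℂ → ℂ} {S : Finset ℝ} {t₀ R r₀ δ s A τ c : ℝ}
    (hδ : 0 < δ) (hδR : δ ≤ 2 * R) (hr₀ : 0 < r₀) (hr₀R : r₀ ≤ R)
    (hS : ∀ t ∈ S, |t - t₀| ≤ R) (hsep : ∀ x ∈ S, ∀ y ∈ S, x ≠ y → δ ≤ dist x y)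
    (hc : ∀ r, r₀ ≤ r → r ≤ R → c * r ≤ {t ∈ S | |t - t₀| ≤ r}.card)
    (hF : Differentiable ℂ F) (hA : 1 ≤ A) (hτ : 0 ≤ τ)
    (hFA : ∀ z, ‖F z‖ ≤ A * Real.exp (τ * |z.im|)) (hFt₀ : 1 / 2 ≤ ‖F t₀‖)
    (hFS : ∀ t ∈ S, ‖F t‖ ≤ s) (hs : S.card * (2 * R / δ) ^ S.card * s ≤ 1 / 4) :
    c * (R - r₀) ≤ Real.log (4 * A + 1) + 2 * τ * R / π := by
  obtain ⟨h_ne, h_upper⟩ := sum_log_div_le_of_norm_le_on (S := S.map ⟨_, ofReal_injective⟩)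
    (c := t₀) (R := R) hδ hδR (by simpa [dist_eq_norm, ← ofReal_sub] using hS)
    (by simpa [dist_eq_norm, ← ofReal_sub] using hsep) hF hA hτ (by simpa using hFA) hFt₀
    (by simpa using hFS) (by rwa [Finset.card_map])
  have h_lower := mul_sub_le_sum_log_div (ρ := fun t => |t - t₀|) hr₀ hr₀R
    (fun t ht => ⟨abs_pos.2 (sub_ne_zero.2 (by simpa using h_ne t (by simpa using ht))), hS t ht⟩)
    hc
  simp only [Finset.sum_map, Function.Embedding.coeFn_mk, ← ofReal_sub, norm_real,
    Real.norm_eq_abs] at h_upper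
  exact h_lower.trans h_upper

lemma eventually_add_mul_lt_mul_sub {a b : ℝ} (hab : a < b) (K r₀ : ℝ) :
    ∀ᶠ R in atTop, K + a * R < b * (R - r₀) := by
  filter_upwards [(tendsto_id.const_mul_atTop (sub_pos.2 hab)).eventually_gt_atTop (K + b * r₀)]
    with R hR
  simp only [id] at hR
  linarith

lemma mul_le_card_filter_of_mul_le_card {Λ : Set ℝ} {t₀ R r σ : ℝ}
    (hfin : (Λ ∩ closedBall t₀ R).Finite) (hrR : r ≤ R) (hr : 0 ≤ r)
    (h : σ * volume.real (closedBall t₀ r) ≤ Nat.card ↥(Λ ∩ closedBall t₀ r)) :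
    2 * σ * r ≤ {t ∈ hfin.toFinset | |t - t₀| ≤ r}.card := by
  have h_eq : Λ ∩ closedBall t₀ r = {t ∈ hfin.toFinset | |t - t₀| ≤ r} := by
    ext t
    simp only [Finset.coe_filter, Set.Finite.mem_toFinset, Set.mem_inter_iff, mem_closedBall,
      Real.dist_eq, Set.mem_ofPred_eq]
    exact ⟨fun ⟨ht, htr⟩ => ⟨⟨ht, htr.trans hrR⟩, htr⟩, fun ⟨⟨ht, _⟩, htr⟩ => ⟨ht, htr⟩⟩
  rw [Real.volume_real_closedBall hr, h_eq, Nat.card_coe_set_eq, Set.ncard_coe_finset] at h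
  linarith

theorem UniformlyDiscrete.exists_lower_bound_of_lt_lowerUniformDensity {Λ : Set ℝ} {A τ : ℝ}
    (hΛ : UniformlyDiscrete Λ) (hA : 1 ≤ A) (hτ : 0 ≤ τ) (hτΛ : τ / π < lowerUniformDensity Λ) :
    ∃ ε > 0, ∀ F : ℂ → ℂ, Differentiable ℂ F → (∀ z, ‖F z‖ ≤ A * Real.exp (τ * |z.im|)) →
      ∀ t₀ : ℝ, 1 / 2 ≤ ‖F t₀‖ → ∃ t ∈ Λ, ε < ‖F t‖ := by
  obtain ⟨C, hC⟩ := hΛ.exists_card_inter_closedBall_le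
  obtain ⟨δ, hδ, hsep⟩ := id hΛ
  obtain ⟨σ, hτσ, hσ⟩ := exists_between hτΛ
  obtain ⟨r₀, hr₀⟩ := eventually_atTop.1 (eventually_mul_volume_closedBall_le_card hσ)
  obtain ⟨R, hR, hr₀R, hδR⟩ := ((eventually_add_mul_lt_mul_sub
    (mul_lt_mul_of_pos_left hτσ two_pos) (Real.log (4 * A + 1)) (max r₀ 1)).and
    ((eventually_ge_atTop (max r₀ 1)).and (eventually_ge_atTop δ))).exists
  set N := ⌈C * R⌉₊
  set B := N * (2 * R / δ) ^ N
  have h_ratio : 1 ≤ 2 * R / δ := (one_le_div hδ).2 (by linarith)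
  refine ⟨1 / (4 * (B + 1)), by positivity, fun F hF hFA t₀ hFt₀ => ?_⟩
  by_contra! h_small
  have h_fin : (Λ ∩ closedBall t₀ R).Finite := Real.closedBall_eq_Icc ▸ hΛ.finite_inter_Icc _ _
  set S := h_fin.toFinset
  have hSΛ {t : ℝ} (ht : t ∈ S) : t ∈ Λ := (h_fin.mem_toFinset.1 ht).1
  have h_card : S.card ≤ N := by
    rw [← Set.ncard_eq_toFinset_card _ h_fin, ← Nat.card_coe_set_eq]
    exact_mod_cast (hC t₀ R ((le_max_right _ _).trans hr₀R)).trans (Nat.le_ceil _)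
  have h_interp : S.card * (2 * R / δ) ^ S.card * (1 / (4 * (B + 1))) ≤ 1 / 4 :=
    calc S.card * (2 * R / δ) ^ S.card * (1 / (4 * (B + 1))) ≤ B * (1 / (4 * (B + 1))) := by
          refine mul_le_mul_of_nonneg_right ?_ (by positivity)
          exact mul_le_mul (Nat.cast_le.2 h_card) (pow_le_pow_right₀ h_ratio h_card)
            (by positivity) (by positivity)
      _ ≤ 1 / 4 := by
          rw [mul_one_div, div_le_div_iff₀ (by positivity) (by norm_num)]
          linarith
  have h_le := mul_sub_le_of_norm_le_on (c := 2 * σ) hδ (by linarith)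
    (lt_max_of_lt_right one_pos) hr₀R (fun t ht => (h_fin.mem_toFinset.1 ht).2)
    (fun x hx y hy => hsep x (hSΛ hx) y (hSΛ hy))
    (fun r hr hrR => mul_le_card_filter_of_mul_le_card h_fin hrR (by linarith [le_max_right r₀ 1])
      (hr₀ r ((le_max_left _ _).trans hr) t₀))
    hF hA hτ hFA hFt₀ (fun t ht => h_small t (hSΛ ht)) h_interp
  linarith [show 2 * τ * R / π = 2 * (τ / π) * R by ring]

section EntireExtension

variable {X : Type*} {p : X → ℝ} {H : X → ℂ} {T : ℝ}

lemma norm_cexp_ofReal_mul_I_mul_le {a : ℝ} (ha : |a| ≤ T) (z : ℂ) :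
    ‖cexp (a * I * z)‖ ≤ Real.exp (T * |z.im|) := by
  rw [norm_exp, Real.exp_le_exp]
  have hre : (a * I * z).re = -(a * z.im) := by simp [mul_re, mul_im]
  calc (a * I * z).re ≤ |a| * |z.im| := by rw [hre, ← abs_mul]; exact neg_le_abs _
    _ ≤ T * |z.im| := by gcongr

lemma norm_cexp_mul_le_of_abs_le (hT : ∀ ξ, H ξ ≠ 0 → |p ξ| ≤ T) (z : ℂ) (ξ : X) :
    ‖cexp (p ξ * I * z) * H ξ‖ ≤ Real.exp (T * |z.im|) * ‖H ξ‖ := by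
  by_cases h : H ξ = 0
  · simp [h]
  · rw [norm_mul]
    gcongr
    exact norm_cexp_ofReal_mul_I_mul_le (hT ξ h) z

variable [MeasurableSpace X] {μ : Measure X}

lemma norm_integral_cexp_mul_le (hH : Integrable H μ) (hT : ∀ ξ, H ξ ≠ 0 → |p ξ| ≤ T) (z : ℂ) :
    ‖∫ ξ, cexp (p ξ * I * z) * H ξ ∂μ‖ ≤ (∫ ξ, ‖H ξ‖ ∂μ) * Real.exp (T * |z.im|) := by
  rw [mul_comm, ← integral_const_mul]
  exact norm_integral_le_of_norm_le (hH.norm.const_mul _)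
    (.of_forall (norm_cexp_mul_le_of_abs_le hT z))

lemma differentiable_integral_cexp_mul (hp : Measurable p) (hH : Integrable H μ)
    (hT : ∀ ξ, H ξ ≠ 0 → |p ξ| ≤ T) :
    Differentiable ℂ fun z : ℂ => ∫ ξ, cexp (p ξ * I * z) * H ξ ∂μ := by
  intro z₀
  have hmeas (z : ℂ) : AEStronglyMeasurable (fun ξ => cexp (p ξ * I * z) * H ξ) μ :=
    (by fun_prop : Measurable fun ξ => cexp (p ξ * I * z)).aestronglyMeasurable.mul hH.1
  have hbound (ξ : X) (z : ℂ) (hz : z ∈ ball z₀ 1) :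
      ‖p ξ * I * (cexp (p ξ * I * z) * H ξ)‖
        ≤ T * (Real.exp (T * (|z₀.im| + 1)) * ‖H ξ‖) := by
    by_cases h : H ξ = 0
    · simp [h]
    have hpT := hT ξ h
    have hT0 : 0 ≤ T := (abs_nonneg _).trans hpT
    have him : |z.im| ≤ |z₀.im| + 1 := by
      have h1 := (abs_im_le_norm (z - z₀)).trans (mem_ball_iff_norm.1 hz).le
      rw [sub_im] at h1
      linarith [abs_sub_abs_le_abs_sub z.im z₀.im]
    have hpI : ‖(p ξ * I : ℂ)‖ = |p ξ| := by simp
    rw [norm_mul, hpI]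
    gcongr
    exact (norm_cexp_mul_le_of_abs_le hT z ξ).trans (by gcongr)
  refine (hasDerivAt_integral_of_dominated_loc_of_deriv_le (ball_mem_nhds z₀ one_pos)
    (.of_forall hmeas)
    ((hH.norm.const_mul _).mono' (hmeas z₀) (.of_forall (norm_cexp_mul_le_of_abs_le hT z₀)))
    ((by fun_prop : Measurable fun ξ => (p ξ * I : ℂ)).aestronglyMeasurable.mul (hmeas z₀))
    (.of_forall hbound) ((hH.norm.const_mul _).const_mul _)
    (.of_forall fun ξ z _ => ?_)).2.differentiableAt
  have hlin : HasDerivAt (fun z : ℂ => p ξ * I * z) (p ξ * I) z := by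
    simpa using (hasDerivAt_id z).const_mul (p ξ * I : ℂ)
  exact (hlin.cexp.mul_const (H ξ)).congr_deriv (by ring)

lemma MemBernstein.exists_entire_eq_norm_on_line {K : Set V} {g : V → ℂ}
    (hg : MemBernstein K g) (hgi : Integrable g) (hK : IsCompact K) {w : V} {c : ℝ}
    (hT : ∀ ξ ∈ K, |⟪ξ, w⟫ - c| ≤ T) :
    ∃ F : ℂ → ℂ, Differentiable ℂ F ∧
      (∀ z, ‖F z‖ ≤ (∫ ξ, ‖𝓕 g ξ‖) * Real.exp (2 * π * T * |z.im|)) ∧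
      ∀ t : ℝ, ‖F t‖ = ‖g (t • w)‖ := by
  set p : V → ℝ := fun ξ => 2 * π * (⟪ξ, w⟫ - c)
  have hp (ξ : V) (hξ : 𝓕 g ξ ≠ 0) : |p ξ| ≤ 2 * π * T := by
    rw [abs_mul, abs_of_pos two_pi_pos]
    gcongr
    exact hT ξ (by_contra fun h => hξ (hg.fourier_eq_zero hgi hK.isClosed h))
  have hi := hg.integrable_fourier hgi hK
  refine ⟨fun z => ∫ ξ, cexp (p ξ * I * z) * 𝓕 g ξ,
    differentiable_integral_cexp_mul (by fun_prop) hi hp,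
    norm_integral_cexp_mul_le hi hp, fun t => ?_⟩
  have hphase (ξ : V) : 𝐞 (-(c * t)) • (𝐞 ⟪t • w, ξ⟫ • 𝓕 g ξ)
      = cexp (p ξ * I * t) * 𝓕 g ξ := by
    rw [Circle.smul_def, Circle.smul_def, smul_eq_mul, smul_eq_mul, ← mul_assoc, ← Circle.coe_mul,
      ← AddChar.map_add_eq_mul, Real.fourierChar_apply, inner_smul_left, real_inner_comm]
    congr 2
    simp only [p, conj_trivial]
    push_cast
    ring
  rw [hg.eq_integral_fourier hgi hK]
  simp only [← hphase, Circle.smul_def, integral_smul, norm_smul, Circle.norm_coe, one_mul]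

end EntireExtension

section Sufficiency

section RadialLines

variable {E : Type*} [NormedAddCommGroup E] [InnerProductSpace ℝ E] {Ω : Set E} {w : E}

lemma exists_abs_inner_sub_le_half_diam (hΩ : IsCompact Ω) (hw : ‖w‖ = 1) :
    ∃ c : ℝ, ∀ ξ ∈ Ω, |⟪ξ, w⟫ - c| ≤ Metric.diam Ω / 2 := by
  rcases Ω.eq_empty_or_nonempty with rfl | hne
  · exact ⟨0, by simp⟩
  have hcont : ContinuousOn (fun ξ : E => ⟪ξ, w⟫) Ω := by fun_prop
  obtain ⟨a, ha, hmin⟩ := hΩ.exists_isMinOn hne hcont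
  obtain ⟨b, hb, hmax⟩ := hΩ.exists_isMaxOn hne hcont
  have hwidth : ⟪b, w⟫ - ⟪a, w⟫ ≤ Metric.diam Ω := by
    rw [← inner_sub_left]
    refine (real_inner_le_norm _ _).trans ?_
    rw [hw, mul_one, ← dist_eq_norm]
    exact dist_le_diam_of_mem hΩ.isBounded hb ha
  refine ⟨(⟪a, w⟫ + ⟪b, w⟫) / 2, fun ξ hξ => abs_le.2 ?_⟩
  have h1 : ⟪a, w⟫ ≤ ⟪ξ, w⟫ := hmin hξ
  have h2 : ⟪ξ, w⟫ ≤ ⟪b, w⟫ := hmax hξ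
  constructor <;> linarith

lemma exists_abs_inner_sub_le_of_mem_cthickening (hΩ : IsCompact Ω) {d : ℝ} (hd : 0 ≤ d)
    (hw : ‖w‖ = 1) :
    ∃ c : ℝ, ∀ ξ ∈ cthickening d Ω, |⟪ξ, w⟫ - c| ≤ Metric.diam Ω / 2 + d := by
  obtain ⟨c, hc⟩ := exists_abs_inner_sub_le_half_diam hΩ hw
  refine ⟨c, fun ξ hξ => ?_⟩
  rw [← hΩ.add_closedBall_zero hd] at hξ
  obtain ⟨ζ, hζ, v, hv, rfl⟩ := hξ
  rw [inner_add_left, add_sub_right_comm]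
  refine (abs_add_le _ _).trans (add_le_add (hc ζ hζ) ((abs_real_inner_le_norm _ _).trans ?_))
  rw [hw, mul_one]
  exact mem_closedBall_zero_iff.1 hv

lemma exists_norm_smul_eq [Nontrivial E] (x : E) : ∃ w : E, ‖w‖ = 1 ∧ ‖x‖ • w = x := by
  rcases eq_or_ne x 0 with rfl | hx
  · obtain ⟨w, hw⟩ := exists_norm_eq E zero_le_one
    exact ⟨w, hw, by rw [norm_zero, zero_smul]⟩
  · exact ⟨‖x‖⁻¹ • x, norm_smul_inv_norm hx, smul_inv_smul₀ (norm_ne_zero_iff.2 hx) x⟩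

lemma smul_mem_iUnion_sphere {Q : Set ℝ} (hQpos : Q ⊆ Set.Ioi 0) (hw : ‖w‖ = 1) {t : ℝ}
    (ht : t ∈ Q ∪ -Q) : t • w ∈ ⋃ q ∈ Q, sphere (0 : E) q := by
  have hnorm : ‖t • w‖ = |t| := by rw [norm_smul, hw, mul_one, Real.norm_eq_abs]
  refine Set.mem_iUnion₂.2 ⟨|t|, ?_, mem_sphere_zero_iff_norm.2 hnorm⟩
  rcases ht with ht | ht
  · rwa [abs_of_pos (hQpos ht)]
  · rwa [abs_of_neg (neg_pos.1 (hQpos ht))]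

end RadialLines

variable {Ω : Set V}

lemma exists_entire_minorant_on_line (hΩ : IsCompact Ω) {d : ℝ} (hd : 0 < d) :
    ∃ A ≥ 1, ∀ f ∈ bernsteinUnitBall Ω, ∀ w : V, ‖w‖ = 1 → ∀ t₀ : ℝ, ∃ F : ℂ → ℂ,
      Differentiable ℂ F ∧
      (∀ z, ‖F z‖ ≤ A * Real.exp (2 * π * (Metric.diam Ω / 2 + d) * |z.im|)) ∧
      ‖F t₀‖ = ‖f (t₀ • w)‖ ∧ ∀ t : ℝ, ‖F t‖ ≤ ‖f (t • w)‖ := by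
  obtain ⟨κ, hκ, hκ0, hκ1⟩ := exists_schwartz_memBernstein_closedBall V hd
  refine ⟨max 1 (volume.real (cthickening d Ω) * ∫ x, ‖κ x‖), le_max_left _ _,
    fun f hf w hw t₀ => ?_⟩
  obtain ⟨c, hc⟩ := exists_abs_inner_sub_le_of_mem_cthickening hΩ hd.le hw
  obtain ⟨F, hF, hFgrowth, hFline⟩ :=
    (memBernstein_mul_kernel hΩ hd.le hf.1 hκ (t₀ • w)).exists_entire_eq_norm_on_line
      (integrable_mul_kernel hf.1 κ (t₀ • w)) hΩ.cthickening hc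
  refine ⟨F, hF, fun z => (hFgrowth z).trans ?_, ?_, fun t => ?_⟩
  · gcongr
    exact (integral_norm_fourier_mul_kernel_le hΩ hd.le hf hκ _).trans (le_max_right _ _)
  · rw [hFline, sub_self, hκ0, mul_one]
  · rw [hFline, norm_mul]
    exact mul_le_of_le_one_right (norm_nonneg _) (hκ1 _)

theorem isSamplingSet_of_diam_lt_lowerUniformDensity [Nontrivial V] (hΩ : IsCompact Ω)
    {Q : Set ℝ} (hQpos : Q ⊆ Set.Ioi 0) (hQ : UniformlyDiscrete Q)
    (hd : Metric.diam Ω < lowerUniformDensity (Q ∪ -Q)) :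
    IsSamplingSet Ω (⋃ q ∈ Q, sphere (0 : V) q) := by
  obtain ⟨σ, hdσ, hσ⟩ := exists_between hd
  obtain ⟨A, hA, hext⟩ := exists_entire_minorant_on_line hΩ
    (d := (σ - Metric.diam Ω) / 2) (by linarith)
  have hτ : 2 * π * (Metric.diam Ω / 2 + (σ - Metric.diam Ω) / 2) = π * σ := by ring
  have hσ0 : 0 ≤ σ := Metric.diam_nonneg.trans hdσ.le
  obtain ⟨ε, hε, hlower⟩ :=
    (hQ.union_neg hQpos).exists_lower_bound_of_lt_lowerUniformDensity hA (τ := π * σ)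
      (by positivity) (by rwa [mul_div_cancel_left₀ σ pi_ne_zero])
  refine isSamplingSet_iff.2 ⟨ε, hε, fun f hf ⟨x, hx⟩ => ?_⟩
  obtain ⟨w, hw, hxw⟩ := exists_norm_smul_eq x
  obtain ⟨F, hF, hFgrowth, hFx, hFle⟩ := hext f hf w hw ‖x‖
  obtain ⟨t, ht, hεt⟩ := hlower F hF (hτ ▸ hFgrowth) ‖x‖ (by rwa [hFx, hxw])
  exact ⟨t • w, smul_mem_iUnion_sphere hQpos hw ht, hεt.le.trans (hFle t)⟩

end Sufficiency

section SparseIntervals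

variable {Q : Set ℝ} {D ℓ X : ℝ}

lemma mul_le_ncard_inter_Ico_add_nat_mul (hfin : ∀ a b, (Q ∩ Set.Icc a b).Finite) (hℓ : 0 ≤ ℓ)
    (h : ∀ x ≥ X, D * ℓ ≤ (Q ∩ Set.Ico x (x + ℓ)).ncard) {a : ℝ} (ha : X ≤ a) (n : ℕ) :
    D * ℓ * n ≤ (Q ∩ Set.Ico a (a + n * ℓ)).ncard := by
  have hfin' (a b : ℝ) : (Q ∩ Set.Ico a b).Finite :=
    (hfin a b).subset (Set.inter_subset_inter_right _ Set.Ico_subset_Icc_self)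
  induction n with
  | zero => simp
  | succ n ih =>
    have hn : 0 ≤ n * ℓ := by positivity
    have hunion : Q ∩ Set.Ico a (a + (n + 1 : ℕ) * ℓ) =
        (Q ∩ Set.Ico a (a + n * ℓ)) ∪ (Q ∩ Set.Ico (a + n * ℓ) (a + n * ℓ + ℓ)) := by
      rw [← Set.inter_union_distrib_left, Set.Ico_union_Ico_eq_Ico (by linarith) (by linarith)]
      push_cast
      ring_nf
    have hdisj : Disjoint (Q ∩ Set.Ico a (a + n * ℓ))
        (Q ∩ Set.Ico (a + n * ℓ) (a + n * ℓ + ℓ)) :=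
      Set.disjoint_left.2 fun x hx hx' => hx'.2.1.not_gt hx.2.2
    rw [hunion, Set.ncard_union_eq hdisj (hfin' _ _) (hfin' _ _)]
    push_cast
    linarith [h (a + n * ℓ) (by linarith)]

lemma mul_max_sub_le_ncard_inter_Icc (hfin : ∀ a b, (Q ∩ Set.Icc a b).Finite) (hD : 0 ≤ D)
    (hℓ : 0 < ℓ) (h : ∀ x ≥ X, D * ℓ ≤ (Q ∩ Set.Ico x (x + ℓ)).ncard) {a : ℝ} (ha : X ≤ a)
    (b : ℝ) : D * (max (b - a) 0 - ℓ) ≤ (Q ∩ Set.Icc a b).ncard := by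
  rcases le_total (b - a) 0 with hba | hba
  · rw [max_eq_right hba]
    exact (mul_nonpos_of_nonneg_of_nonpos hD (by linarith)).trans (Nat.cast_nonneg _)
  set n := ⌊(b - a) / ℓ⌋₊
  have hn : n * ℓ ≤ b - a := (le_div_iff₀ hℓ).1 (Nat.floor_le (by positivity))
  have hn' : b - a < (n + 1) * ℓ := (div_lt_iff₀ hℓ).1 (Nat.lt_floor_add_one _)
  calc D * (max (b - a) 0 - ℓ) ≤ D * (ℓ * n) := by
        rw [max_eq_left hba]
        exact mul_le_mul_of_nonneg_left (by linarith) hD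
    _ = D * ℓ * n := by ring
    _ ≤ (Q ∩ Set.Ico a (a + n * ℓ)).ncard :=
        mul_le_ncard_inter_Ico_add_nat_mul hfin hℓ.le h ha n
    _ ≤ (Q ∩ Set.Icc a b).ncard := by
        refine Nat.cast_le.2 (Set.ncard_le_ncard (Set.inter_subset_inter_right _ ?_) (hfin a b))
        exact fun x hx => ⟨hx.1, by linarith [hx.2]⟩

lemma mul_sub_le_ncard_union_neg_inter_Icc (hQpos : Q ⊆ Set.Ioi 0)
    (hfin : ∀ a b, (Q ∩ Set.Icc a b).Finite) (hD : 0 ≤ D) (hℓ : 0 < ℓ) (hX : 0 ≤ X)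
    (h : ∀ x ≥ X, D * ℓ ≤ (Q ∩ Set.Ico x (x + ℓ)).ncard) (a b : ℝ) :
    D * (b - a - 2 * X - 2 * ℓ) ≤ ((Q ∪ -Q) ∩ Set.Icc a b).ncard := by
  have hneg (a b : ℝ) : -Q ∩ Set.Icc a b = -(Q ∩ Set.Icc (-b) (-a)) := by
    rw [Set.inter_neg, Set.neg_Icc, neg_neg, neg_neg]
  have hfin_neg (a b : ℝ) : (-Q ∩ Set.Icc a b).Finite := hneg a b ▸ (hfin _ _).neg
  have hright := mul_max_sub_le_ncard_inter_Icc hfin hD hℓ h (le_max_right a X) b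
  have hleft := mul_max_sub_le_ncard_inter_Icc hfin hD hℓ h (le_max_right (-b) X) (-a)
  have hncard : (Q ∩ Set.Icc (max (-b) X) (-a)).ncard
      = (-Q ∩ Set.Icc a (-(max (-b) X))).ncard := by
    rw [hneg, neg_neg, ← Set.image_neg_eq_neg, Set.ncard_image_of_injective _ neg_injective]
  have hdisj : Disjoint (Q ∩ Set.Icc (max a X) b) (-Q ∩ Set.Icc a (-(max (-b) X))) :=
    Set.disjoint_left.2 fun y hy hy' =>
      lt_asymm (hQpos hy.1) (neg_pos.1 (Set.mem_Ioi.1 (hQpos hy'.1)))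
  have hsub : Q ∩ Set.Icc (max a X) b ∪ -Q ∩ Set.Icc a (-(max (-b) X))
      ⊆ (Q ∪ -Q) ∩ Set.Icc a b := by
    rintro y (⟨hy, hay, hyb⟩ | ⟨hy, hay, hyb⟩)
    · exact ⟨.inl hy, (le_max_left _ _).trans hay, hyb⟩
    · exact ⟨.inr hy, hay, by linarith [le_max_left (-b) X]⟩
  have hlength : b - a - 2 * X ≤ max (b - max a X) 0 + max (-a - max (-b) X) 0 := by grind
  have htotal : (((Q ∩ Set.Icc (max a X) b).ncard + (-Q ∩ Set.Icc a (-(max (-b) X))).ncard : ℕ)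
      : ℝ) ≤ ((Q ∪ -Q) ∩ Set.Icc a b).ncard := by
    rw [← Set.ncard_union_eq hdisj (hfin _ _) (hfin_neg _ _), Nat.cast_le]
    refine Set.ncard_le_ncard hsub ?_
    rw [Set.union_inter_distrib_right]
    exact (hfin a b).union (hfin_neg a b)
  rw [hncard] at hleft
  push_cast at htotal
  linarith [mul_le_mul_of_nonneg_left hlength hD]

lemma exists_ncard_inter_Ico_lt (hQpos : Q ⊆ Set.Ioi 0) (hQ : UniformlyDiscrete Q)
    (hD : lowerUniformDensity (Q ∪ -Q) < D) (hℓ : 0 < ℓ) (X : ℝ) :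
    ∃ x ≥ X, ((Q ∩ Set.Ico x (x + ℓ)).ncard : ℝ) < D * ℓ := by
  wlog hX : 0 ≤ X generalizing X
  · obtain ⟨x, hx, hxD⟩ := this 0 le_rfl
    exact ⟨x, (le_of_not_ge hX).trans hx, hxD⟩
  have hΛ := hQ.union_neg hQpos
  have hD0 : 0 ≤ D := hΛ.lowerUniformDensity_nonneg.trans hD.le
  by_contra! hdense
  obtain ⟨σ, hσ, hσD⟩ := exists_between hD
  refine hσ.not_ge (hΛ.le_lowerUniformDensity ?_)
  filter_upwards [eventually_ge_atTop (D * (X + ℓ) / (D - σ))] with r hr x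
  have hcount := mul_sub_le_ncard_union_neg_inter_Icc hQpos hQ.finite_inter_Icc hD0 hℓ hX hdense
    (x - r) (x + r)
  rw [div_le_iff₀ (sub_pos.2 hσD)] at hr
  linarith

end SparseIntervals

section WindowedSinc

lemma abs_sinc_mul_abs_le_one (x : ℝ) : |sinc x| * |x| ≤ 1 := by
  rcases eq_or_ne x 0 with rfl | hx
  · simp
  · rw [sinc_of_ne_zero hx, abs_div, div_mul_cancel₀ _ (abs_ne_zero.2 hx)]
    exact abs_sin_le_one x

/-- The cardinal function of the lattice `s⁻¹ℤ`, multiplied by a second cardinal function of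
bandwidth `δ` that makes it decay quadratically. -/
def windowedSinc (s δ t : ℝ) : ℝ := sinc (π * s * t) * sinc (π * δ * t)

variable {s δ : ℝ}

lemma windowedSinc_zero (s δ : ℝ) : windowedSinc s δ 0 = 1 := by
  simp only [windowedSinc, mul_zero, sinc_zero, mul_one]

lemma abs_windowedSinc_le_one (s δ t : ℝ) : |windowedSinc s δ t| ≤ 1 := by
  rw [windowedSinc, abs_mul]
  exact mul_le_one₀ (abs_sinc_le_one _) (abs_nonneg _) (abs_sinc_le_one _)

lemma abs_windowedSinc_mul_sq_le_one (hs : 0 < s) (hδ : 0 < δ) (t : ℝ) :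
    |windowedSinc s δ t| * (π ^ 2 * s * δ * t ^ 2) ≤ 1 := by
  refine le_of_eq_of_le ?_ (mul_le_one₀ (abs_sinc_mul_abs_le_one (π * s * t)) (by positivity)
    (abs_sinc_mul_abs_le_one (π * δ * t)))
  simp only [windowedSinc, abs_mul, abs_of_pos pi_pos, abs_of_pos hs, abs_of_pos hδ]
  rw [← sq_abs t]
  ring

lemma windowedSinc_int_div (hs : s ≠ 0) (δ : ℝ) {n : ℤ} (hn : n ≠ 0) :
    windowedSinc s δ (n / s) = 0 := by
  have harg : π * s * (n / s) = n * π := by field_simp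
  rw [windowedSinc, harg, sinc_of_ne_zero (mul_ne_zero (Int.cast_ne_zero.2 hn) pi_ne_zero),
    Real.sin_int_mul_pi, zero_div, zero_mul]

lemma memBernstein_windowedSinc {u : V} (hu : ‖u‖ = 1) (hδ : 0 ≤ δ) (s p : ℝ) :
    MemBernstein (segment ℝ (-((s / 2) • u)) ((s / 2) • u) + closedBall 0 (δ / 2))
      fun x => (windowedSinc s δ (⟪x, u⟫ - p) : ℂ) := by
  have hseg : segment ℝ (-((δ / 2) • u)) ((δ / 2) • u) ⊆ closedBall 0 (δ / 2) := by
    refine (convex_closedBall 0 (δ / 2)).segment_subset ?_ ?_ <;>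
      simp [norm_smul, hu, abs_of_nonneg hδ]
  have h := (((memBernstein_one (Set.mem_singleton (0 : V))).mul_sinc
    ((s / 2) • u)).mul_sinc ((δ / 2) • u)).comp_add_right (-(p • u))
  convert h.mono (Set.add_subset_add (zero_add (segment ℝ _ _)).subset hseg) using 2 with x
  have hinner : ⟪x + -(p • u), u⟫ = ⟪x, u⟫ - p := by
    rw [inner_add_left, inner_neg_left, inner_smul_left, real_inner_self_eq_norm_sq, hu]
    simp [sub_eq_add_neg]
  have harg (a t : ℝ) : 2 * π * (a / 2 * t) = π * a * t := by ring
  simp only [windowedSinc, inner_smul_right, hinner, harg, ofReal_mul, one_mul]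

end WindowedSinc

section Interpolation

/- With fewer constraints than nodes, some nonzero combination vanishes on `S`; rescaled to have
supremum one, it has coefficients at most one, since these are its values at the nodes. -/
lemma exists_mem_span_eq_zero_on {X ι : Type*} [Fintype ι] [DecidableEq ι] {φ : ι → X → ℝ}
    (hφ : ∀ i t, |φ i t| ≤ 1) {p : ι → X} (hp : ∀ i j, φ i (p j) = if i = j then 1 else 0)
    {S : Finset X} (hS : S.card < Fintype.card ι) :
    ∃ g ∈ Submodule.span ℝ (Set.range φ), (∀ t, |g t| ≤ 1) ∧ (∃ t, 1 / 2 ≤ |g t|) ∧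
      (∀ t, |g t| ≤ ∑ i, |φ i t|) ∧ ∀ q ∈ S, g q = 0 := by
  let T : (ι → ℝ) →ₗ[ℝ] S → ℝ :=
    LinearMap.funLeft ℝ ℝ ((↑) : S → X) ∘ₗ Fintype.linearCombination ℝ φ
  obtain ⟨a, ha, ha0⟩ := (Submodule.ne_bot_iff _).1
    (T.ker_ne_bot_of_finrank_lt (by simpa using hS))
  set g : X → ℝ := Fintype.linearCombination ℝ φ a
  have hg (t : X) : g t = ∑ i, a i * φ i t := by
    simp [g, Fintype.linearCombination_apply, Finset.sum_apply]
  have hgnode (i : ι) : g (p i) = a i := by simp [hg, hp]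
  have hbdd : BddAbove (Set.range fun t => |g t|) := by
    refine ⟨∑ i, |a i|, ?_⟩
    rintro _ ⟨t, rfl⟩
    simp only [hg]
    refine (Finset.abs_sum_le_sum_abs _ _).trans (Finset.sum_le_sum fun i _ => ?_)
    rw [abs_mul]
    exact mul_le_of_le_one_right (abs_nonneg _) (hφ i t)
  set M := ⨆ t, |g t|
  have hM (t : X) : |g t| ≤ M := le_ciSup hbdd t
  obtain ⟨i₀, hi₀⟩ := Function.ne_iff.1 ha0
  have hM0 : 0 < M := (abs_pos.2 hi₀).trans_le (hgnode i₀ ▸ hM (p i₀))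
  have : Nonempty X := ⟨p i₀⟩
  have hscale (t : X) : |(M⁻¹ • g) t| = |g t| / M := by
    rw [Pi.smul_apply, smul_eq_mul, abs_mul, abs_inv, abs_of_pos hM0, inv_mul_eq_div]
  refine ⟨M⁻¹ • g, Submodule.smul_mem _ _ ?_, fun t => ?_, ?_, fun t => ?_, fun q hq => ?_⟩
  · exact Fintype.range_linearCombination ℝ φ ▸ LinearMap.mem_range_self _ a
  · exact hscale t ▸ div_le_one_of_le₀ (hM t) hM0.le
  · obtain ⟨t, ht⟩ := exists_lt_of_lt_ciSup (half_lt_self hM0)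
    exact ⟨t, by rw [hscale, le_div_iff₀ hM0]; linarith⟩
  · rw [hscale, div_le_iff₀ hM0, hg, Finset.sum_mul]
    refine (Finset.abs_sum_le_sum_abs _ _).trans (Finset.sum_le_sum fun i _ => ?_)
    rw [abs_mul, mul_comm]
    exact mul_le_mul_of_nonneg_left (hgnode i ▸ hM (p i)) (abs_nonneg _)
  · have hTa : g q = 0 := congrFun (LinearMap.mem_ker.1 ha) ⟨q, hq⟩
    rw [Pi.smul_apply, hTa, smul_zero]

variable {s δ : ℝ}

lemma sum_abs_windowedSinc_sub_nodes_le (hs : 0 < s) (hδ : 0 < δ) {m : ℕ} {x ρ t : ℝ}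
    (hρ : 0 < ρ) (ht : t ∉ Set.Ico x (x + (m / s + 2 * ρ))) :
    ∑ i : Fin m, |windowedSinc s δ (t - (x + ρ + i / s))| ≤ m / (π ^ 2 * s * δ * ρ ^ 2) := by
  have hdist (i : Fin m) : ρ ≤ |t - (x + ρ + i / s)| := by
    have hi0 : 0 ≤ (i : ℝ) / s := by positivity
    have him : (i : ℝ) / s ≤ m / s := by gcongr; exact i.2.le
    rw [Set.mem_Ico, not_and_or, not_le, not_lt] at ht
    rcases ht with ht | ht
    · exact le_trans (by linarith) (neg_le_abs _)
    · exact le_trans (by linarith) (le_abs_self _)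
  have hterm (i : Fin m) :
      |windowedSinc s δ (t - (x + ρ + i / s))| ≤ 1 / (π ^ 2 * s * δ * ρ ^ 2) := by
    rw [le_div_iff₀ (by positivity)]
    refine le_trans ?_ (abs_windowedSinc_mul_sq_le_one hs hδ (t - (x + ρ + i / s)))
    rw [← sq_abs (t - _)]
    gcongr
    exact hdist i
  refine (Finset.sum_le_sum fun i _ => hterm i).trans_eq ?_
  rw [Finset.sum_const, Finset.card_univ, Fintype.card_fin, nsmul_eq_mul, mul_one_div]

lemma windowedSinc_sub_nodes (hs : s ≠ 0) {m : ℕ} (x : ℝ) (i j : Fin m) :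
    windowedSinc s δ ((x + j / s) - (x + i / s)) = if i = j then 1 else 0 := by
  split_ifs with hij
  · rw [hij, sub_self, windowedSinc_zero]
  · have hdiff : (x + j / s) - (x + i / s) = ((j - i : ℤ) : ℝ) / s := by push_cast; ring
    rw [hdiff, windowedSinc_int_div hs]
    have := Fin.val_ne_of_ne hij
    lia

variable {Q : Set ℝ}

/- The nodes of spacing `1 / s` fill the middle of an interval of length `m / s'`, which contains
fewer than `m` points of `Q`; the two margins have length proportional to `m`, so that the quadratic
decay makes the combination small outside the interval. -/
lemma exists_mem_span_windowedSinc_small (hQpos : Q ⊆ Set.Ioi 0) (hQ : UniformlyDiscrete Q)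
    (hs : lowerUniformDensity (Q ∪ -Q) < s) (hδ : 0 < δ) {ε : ℝ} (hε : 0 < ε)
    (hε2 : ε < 1 / 2) (X : ℝ) :
    ∃ g ∈ Submodule.span ℝ (Set.range fun p t => windowedSinc s δ (t - p)),
      (∀ t, |g t| ≤ 1) ∧ (∃ t ≥ X, 1 / 2 ≤ |g t|) ∧ ∀ q ∈ Q, |g q| ≤ ε := by
  obtain ⟨s', hs', hs's⟩ := exists_between hs
  have hs'0 : 0 < s' := (hQ.union_neg hQpos).lowerUniformDensity_nonneg.trans_lt hs'
  have hs0 : 0 < s := hs'0.trans hs's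
  set θ := (1 / s' - 1 / s) / 2
  have hθ : 0 < θ := half_pos (sub_pos.2 (one_div_lt_one_div_of_lt hs'0 hs's))
  obtain ⟨m, hm⟩ := exists_nat_gt (1 / (ε * (π ^ 2 * s * δ * θ ^ 2)))
  have hm0 : (0 : ℝ) < m := lt_trans (by positivity) hm
  obtain ⟨x, hxX, hcard⟩ := exists_ncard_inter_Ico_lt hQpos hQ hs'
    (ℓ := m / s') (by positivity) X
  have hfin : (Q ∩ Set.Ico x (x + m / s')).Finite :=
    (hQ.finite_inter_Icc _ _).subset (Set.inter_subset_inter_right _ Set.Ico_subset_Icc_self)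
  rw [mul_div_cancel₀ _ hs'0.ne', Nat.cast_lt, Set.ncard_eq_toFinset_card _ hfin] at hcard
  set p : Fin m → ℝ := fun i => x + m * θ + i / s
  obtain ⟨g, hg, hg1, ⟨t₀, ht₀⟩, hgsum, hgS⟩ := exists_mem_span_eq_zero_on
    (φ := fun i t => windowedSinc s δ (t - p i)) (fun i t => abs_windowedSinc_le_one s δ _)
    (windowedSinc_sub_nodes hs0.ne' (x + m * θ)) (by rwa [Fintype.card_fin])
  have houtside (t : ℝ) (ht : t ∉ Set.Ico x (x + m / s')) : |g t| ≤ ε := by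
    have hlength : m / s' = m / s + 2 * (m * θ) := by simp only [θ]; ring
    refine (hgsum t).trans ((sum_abs_windowedSinc_sub_nodes_le hs0 hδ (mul_pos hm0 hθ)
      (hlength ▸ ht)).trans ?_)
    rw [div_lt_iff₀ (by positivity)] at hm
    rw [div_le_iff₀ (by positivity)]
    linarith [mul_lt_mul_of_pos_left hm hm0]
  refine ⟨g, Submodule.span_mono ?_ hg, hg1, ⟨t₀, ?_, ht₀⟩, fun q hq => ?_⟩
  · rintro _ ⟨i, rfl⟩
    exact ⟨p i, rfl⟩
  · by_contra! h
    exact (ht₀.trans (houtside t₀ fun ht => (hxX.trans ht.1).not_gt h)).not_gt hε2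
  · by_cases hqI : q ∈ Set.Ico x (x + m / s')
    · rw [hgS q (hfin.mem_toFinset.2 ⟨hq, hqI⟩), abs_zero]
      exact hε.le
    · exact houtside q hqI

end Interpolation

section SmallOnSpheres

lemma exists_dist_eq_diam {X : Type*} [PseudoMetricSpace X] {K : Set X} (hK : IsCompact K)
    (hne : K.Nonempty) : ∃ a ∈ K, ∃ b ∈ K, dist a b = Metric.diam K := by
  obtain ⟨⟨a, b⟩, ⟨ha, hb⟩, hmax⟩ := (hK.prod hK).exists_isMaxOn (hne.prod hne)
    (f := fun z : X × X => dist z.1 z.2) (by fun_prop)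
  exact ⟨a, ha, b, hb, (dist_le_diam_of_mem hK.isBounded ha hb).antisymm
    (diam_le_of_forall_dist_le dist_nonneg fun x hx y hy => hmax (Set.mk_mem_prod hx hy))⟩

lemma exists_norm_le_of_tendsto_cocompact {E F : Type*} [NormedAddCommGroup E] [ProperSpace E]
    [NormedAddCommGroup F] {f : E → F} (hf : Tendsto f (cocompact E) (𝓝 0)) {ε : ℝ} (hε : 0 < ε) :
    ∃ R : ℝ, ∀ x, R ≤ ‖x‖ → ‖f x‖ ≤ ε := by
  rw [← cobounded_eq_cocompact] at hf
  obtain ⟨R, -, hR⟩ := hasBasis_cobounded_norm.eventually_iff.1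
    (hf.norm.eventually_le_const (norm_zero.trans_lt hε))
  exact ⟨R, fun x hx => hR hx⟩

section Flatness

variable {E : Type*} [NormedAddCommGroup E] [InnerProductSpace ℝ E] {u : E}

lemma two_mul_norm_sub_inner_le (hu : ‖u‖ = 1) (x : E) (t : ℝ) :
    2 * t * (‖x‖ - ⟪x, u⟫) ≤ ‖x - t • u‖ ^ 2 := by
  have hexp : ‖x - t • u‖ ^ 2 = ‖x‖ ^ 2 - 2 * (t * ⟪x, u⟫) + t ^ 2 := by
    rw [norm_sub_sq_real, inner_smul_right, norm_smul, hu, mul_one, Real.norm_eq_abs, sq_abs]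
  linarith [sq_nonneg (‖x‖ - t)]

lemma dist_inner_smul_norm_smul_lt (hu : ‖u‖ = 1) {x : E} {r t Y : ℝ} (hr : 0 < r)
    (ht : Y ^ 2 / (2 * r) ≤ t) (hx : ‖x - t • u‖ < Y) : dist (⟪x, u⟫ • u) (‖x‖ • u) < r := by
  have ht0 : 0 ≤ t := le_trans (by positivity) ht
  have hinner : ⟪x, u⟫ ≤ ‖x‖ := by simpa [hu] using real_inner_le_norm x u
  rw [div_le_iff₀ (by positivity)] at ht
  rw [dist_eq_norm, ← sub_smul, norm_smul, hu, mul_one, Real.norm_eq_abs, abs_sub_comm,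
    abs_of_nonneg (sub_nonneg.2 hinner)]
  refine lt_of_mul_lt_mul_left (a := 2 * t) ?_ (by positivity)
  calc 2 * t * (‖x‖ - ⟪x, u⟫) ≤ ‖x - t • u‖ ^ 2 := two_mul_norm_sub_inner_le hu x t
    _ < Y ^ 2 := by gcongr
    _ ≤ 2 * t * r := by linarith

end Flatness

variable {s δ : ℝ}

lemma memBernstein_comp_inner_of_mem_span {u : V} (hu : ‖u‖ = 1) (hδ : 0 ≤ δ) {g : ℝ → ℝ}
    (hg : g ∈ Submodule.span ℝ (Set.range fun p t => windowedSinc s δ (t - p))) :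
    MemBernstein (segment ℝ (-((s / 2) • u)) ((s / 2) • u) + closedBall 0 (δ / 2))
      fun x => (g ⟪x, u⟫ : ℂ) := by
  induction hg using Submodule.span_induction with
  | mem g hg =>
    obtain ⟨p, rfl⟩ := hg
    exact memBernstein_windowedSinc hu hδ s p
  | zero => simpa using MemBernstein.zero _
  | add g₁ g₂ _ _ h₁ h₂ => simpa using h₁.add h₂
  | smul c g _ h => simpa using h.const_mul (c : ℂ)

variable {Ω : Set V} [Nontrivial V]

lemma exists_direction_windowedSinc_mem (hΩ : IsCompact Ω) (hconv : Convex ℝ Ω)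
    (hne : Ω.Nonempty) {η : ℝ} (hη : 0 ≤ η) :
    ∃ u : V, ‖u‖ = 1 ∧ ∀ g ∈ Submodule.span ℝ
      (Set.range fun p t => windowedSinc (Metric.diam Ω + 2 * η) (2 * η) (t - p)),
      ∃ F, MemBernstein (cthickening (η + η) Ω) F ∧ ∀ x, ‖F x‖ = |g ⟪x, u⟫| := by
  obtain ⟨a, ha, b, hb, hab⟩ := exists_dist_eq_diam hΩ hne
  obtain ⟨u, hu, hdu⟩ := exists_norm_smul_eq (b - a)
  rw [← dist_eq_norm, dist_comm, hab] at hdu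
  refine ⟨u, hu, fun g hg => ⟨_, ((memBernstein_comp_inner_of_mem_span hu (by positivity)
    hg).modulate ((1 / 2 : ℝ) • (a + b))).mono ?_, fun x => by simp [Circle.norm_smul]⟩⟩
  have hend {z v : V} (hz : z ∈ Ω) (hv : ‖v‖ = η) : z + v ∈ cthickening η Ω :=
    mem_cthickening_of_dist_le _ _ _ _ hz (by simp [hv])
  have hnorm : ‖η • u‖ = η := by rw [norm_smul, hu, mul_one, Real.norm_of_nonneg hη]
  have hleft : (1 / 2 : ℝ) • (a + b) + -(((Metric.diam Ω + 2 * η) / 2) • u) = a + -(η • u) := by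
    linear_combination (norm := module) (-1 / 2 : ℝ) • hdu
  have hright : (1 / 2 : ℝ) • (a + b) + ((Metric.diam Ω + 2 * η) / 2) • u = b + η • u := by
    linear_combination (norm := module) (1 / 2 : ℝ) • hdu
  rw [← vadd_add_assoc, vadd_segment, vadd_eq_add, vadd_eq_add, hleft, hright,
    mul_div_cancel_left₀ η two_ne_zero]
  refine (Set.add_subset_add_right ((hconv.cthickening η).segment_subset
    (hend ha (by rwa [norm_neg])) (hend hb hnorm))).trans ?_
  rw [hΩ.cthickening.add_closedBall_zero hη]
  exact cthickening_cthickening_subset hη hη Ω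

/- Near the point `t • u` with `t` large, the spheres centred at the origin are almost flat, so a
function of `⟪x, u⟫` that is small on `Q` is small there on the spheres with radii in `Q`; the
kernel makes the product small everywhere else. -/
theorem exists_mem_bernsteinUnitBall_small_on_spheres (hΩ : IsCompact Ω) (hconv : Convex ℝ Ω)
    (hne : Ω.Nonempty) {Q : Set ℝ} (hQpos : Q ⊆ Set.Ioi 0) (hQ : UniformlyDiscrete Q)
    (hd : lowerUniformDensity (Q ∪ -Q) ≤ Metric.diam Ω) {ε : ℝ} (hε : 0 < ε) :
    ∃ f ∈ bernsteinUnitBall (cthickening ε Ω), (∃ x, 1 / 2 ≤ ‖f x‖) ∧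
      ∀ p ∈ ⋃ q ∈ Q, sphere (0 : V) q, ‖f p‖ ≤ ε := by
  obtain ⟨η, hη, rfl⟩ : ∃ η > 0, η + (η + η) = ε := ⟨ε / 3, by positivity, by ring⟩
  obtain ⟨u, hu, hplane⟩ := exists_direction_windowedSinc_mem hΩ hconv hne hη.le
  obtain ⟨κ, hκ, hκ0, hκ1⟩ := exists_schwartz_memBernstein_closedBall V hη
  obtain ⟨r, hr, hmod⟩ := exists_modulus_bernsteinUnitBall (hΩ.cthickening (r := η + η)) hη
  obtain ⟨Y, hY⟩ := exists_norm_le_of_tendsto_cocompact (zero_at_infty κ) hη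
  obtain ⟨g, hg, hg1, ⟨t₀, ht₀, hgt₀⟩, hgQ⟩ := exists_mem_span_windowedSinc_small hQpos hQ
    (s := Metric.diam Ω + 2 * η) (by linarith) (δ := 2 * η) (by positivity)
    (ε := min η (1 / 4)) (by positivity) ((min_le_right _ _).trans_lt
      (by norm_num)) (Y ^ 2 / (2 * r))
  obtain ⟨F, hF, hFg⟩ := hplane g hg
  have hF1 (x : V) : ‖F x‖ ≤ 1 := (hFg x).trans_le (hg1 _)
  have hFu (t : ℝ) : ‖F (t • u)‖ = |g t| := by
    rw [hFg, real_inner_smul_left, real_inner_self_eq_norm_sq, hu, one_pow, mul_one]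
  refine ⟨fun x => F x * κ (x - t₀ • u), ⟨(memBernstein_mul_kernel hΩ.cthickening hη.le hF hκ
    _).mono (cthickening_cthickening_subset hη.le (by positivity) Ω), fun x => ?_⟩,
    ⟨t₀ • u, ?_⟩, fun x hx => ?_⟩
  · rw [norm_mul]
    exact mul_le_one₀ (hF1 x) (norm_nonneg _) (hκ1 _)
  · simpa only [sub_self, hκ0, mul_one, hFu] using hgt₀
  · have hxQ : ‖x‖ ∈ Q := by simpa using hx
    rw [norm_mul]
    rcases le_or_gt Y ‖x - t₀ • u‖ with hfar | hnear
    · exact (mul_le_of_le_one_left (norm_nonneg _) (hF1 x)).trans ((hY _ hfar).trans (by linarith))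
    refine (mul_le_of_le_one_right (norm_nonneg _) (hκ1 _)).trans ?_
    have hflat : dist (F (⟪x, u⟫ • u)) (F (‖x‖ • u)) < η :=
      hmod F ⟨hF, hF1⟩ _ _ (dist_inner_smul_norm_smul_lt hu hr ht₀ hnear)
    calc ‖F x‖ = ‖F (⟪x, u⟫ • u)‖ := by rw [hFg, hFu]
      _ ≤ ‖F (⟪x, u⟫ • u) - F (‖x‖ • u)‖ + ‖F (‖x‖ • u)‖ := norm_le_norm_sub_add _ _
      _ ≤ η + η := add_le_add (dist_eq_norm (F _) _ ▸ hflat.le)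
        ((hFu _).trans_le ((hgQ _ hxQ).trans (min_le_left _ _)))
      _ ≤ η + (η + η) := by linarith

end SmallOnSpheres

section Compactness

lemma exists_subseq_tendsto_of_equicontinuous {X E : Type*} [TopologicalSpace X]
    [WeaklyLocallyCompactSpace X] [SigmaCompactSpace X] [MetricSpace E] [CompleteSpace E]
    {F : ℕ → C(X, E)} (hF : Equicontinuous fun n => ⇑(F n)) {K : Set E} (hK : IsCompact K)
    (hFK : ∀ n x, F n x ∈ K) : ∃ f, ∃ φ : ℕ → ℕ, StrictMono φ ∧ Tendsto (F ∘ φ) atTop (𝓝 f) := by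
  have : T2Space (UniformOnFun X E {K | IsCompact K}) := UniformOnFun.t2Space_of_covering
    (Set.sUnion_eq_univ_iff.2 fun x => ⟨{x}, isCompact_singleton, Set.mem_singleton x⟩)
  have hcpt : IsCompact (closure (Set.range F)) :=
    ArzelaAscoli.isCompact_closure_of_isClosedEmbedding (fun _ hK => hK)
      ContinuousMap.isUniformEmbedding_toUniformOnFunIsCompact.isClosedEmbedding
      (fun L _ x _ U hU => ((hF x U hU).filter_mono nhdsWithin_le_nhds).mono
        (by rintro y hy ⟨_, n, rfl⟩; exact hy n))
      fun _ _ x _ => ⟨K, hK, by rintro _ ⟨n, rfl⟩; exact hFK n x⟩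
  obtain ⟨f, -, φ, hφ, hlim⟩ := hcpt.tendsto_subseq fun n => subset_closure (Set.mem_range_self n)
  exact ⟨f, φ, hφ, hlim⟩

variable {Ω : Set V}

lemma mem_bernsteinUnitBall_of_tendsto (hΩ : IsClosed Ω) {F : ℕ → V → ℂ} {δ : ℕ → ℝ}
    (hδ : Tendsto δ atTop (𝓝 0)) (hF : ∀ n, F n ∈ bernsteinUnitBall (cthickening (δ n) Ω))
    {f : V → ℂ} (hf : Continuous f) (hlim : ∀ x, Tendsto (F · x) atTop (𝓝 (f x))) :
    f ∈ bernsteinUnitBall Ω := by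
  have hf1 (x : V) : ‖f x‖ ≤ 1 := le_of_tendsto (hlim x).norm (.of_forall fun n => (hF n).2 x)
  refine ⟨⟨hf, ⟨1, hf1⟩, fun ψ hψ hψc hψΩ => ?_⟩, hf1⟩
  obtain ⟨r, hr, hdisj⟩ :=
    (Set.disjoint_iff_inter_eq_empty.2 hψΩ).exists_cthickenings hψc.isCompact hΩ
  have hzero : ∀ᶠ n in atTop, ∫ x, F n x * 𝓕 ψ x = 0 := by
    filter_upwards [hδ.eventually_le_const hr] with n hn
    exact (hF n).1.2.2 ψ hψ hψc (hdisj.mono (self_subset_cthickening _)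
      (cthickening_mono hn Ω)).inter_eq
  have hψi := integrable_fourier_of_hasCompactSupport hψ hψc
  have hint : Tendsto (fun n => ∫ x, F n x * 𝓕 ψ x) atTop (𝓝 (∫ x, f x * 𝓕 ψ x)) :=
    tendsto_integral_of_dominated_convergence (fun x => ‖𝓕 ψ x‖)
      (fun n => ((hF n).1.integrable_mul hψi).aestronglyMeasurable) hψi.norm
      (fun n => .of_forall fun x => (norm_mul _ _).trans_le
        (mul_le_of_le_one_left (norm_nonneg _) ((hF n).2 x)))
      (.of_forall fun x => (hlim x).mul_const (𝓕 ψ x))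
  exact tendsto_nhds_unique_of_eventuallyEq hint tendsto_const_nhds hzero

theorem exists_subseq_tendsto_bernsteinUnitBall (hΩ : IsCompact Ω) {F : ℕ → V → ℂ} {δ : ℕ → ℝ}
    (hδ : Antitone δ) (hδ0 : Tendsto δ atTop (𝓝 0))
    (hF : ∀ n, F n ∈ bernsteinUnitBall (cthickening (δ n) Ω)) :
    ∃ f ∈ bernsteinUnitBall Ω, ∃ φ : ℕ → ℕ, StrictMono φ ∧
      ∀ K, IsCompact K → TendstoUniformlyOn (fun n => F (φ n)) f atTop K := by
  have hmod := fun ε (hε : 0 < ε) =>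
    exists_modulus_bernsteinUnitBall (hΩ.cthickening (r := δ 0)) (ε := ε) hε
  have hequi : Equicontinuous F := fun x => Metric.equicontinuousAt_iff.2 fun ε hε => by
    obtain ⟨r, hr, h⟩ := hmod ε hε
    exact ⟨r, hr, fun y hy n => h _ (bernsteinUnitBall_mono
      (cthickening_mono (hδ n.zero_le) Ω) (hF n)) _ _ (dist_comm x y ▸ hy)⟩
  obtain ⟨f, φ, hφ, hlim⟩ := exists_subseq_tendsto_of_equicontinuous
    (F := fun n => ⟨F n, (hF n).1.1⟩) hequi (isCompact_closedBall 0 1)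
    fun n x => mem_closedBall_zero_iff.2 ((hF n).2 x)
  rw [ContinuousMap.tendsto_iff_forall_isCompact_tendstoUniformlyOn] at hlim
  exact ⟨f, mem_bernsteinUnitBall_of_tendsto hΩ.isClosed (hδ0.comp hφ.tendsto_atTop)
    (fun n => hF (φ n)) f.continuous fun x =>
      (hlim {x} isCompact_singleton).tendsto_at (Set.mem_singleton x), φ, hφ, hlim⟩

end Compactness

section GlidingHump

variable {Ω : Set V} {f : V → ℂ}

lemma exists_integrable_vanishing_mem_bernsteinUnitBall (hint : (interior Ω).Nonempty) :
    ∃ k ∈ bernsteinUnitBall Ω, Integrable k ∧ Tendsto k (cocompact V) (𝓝 0) ∧ k 0 = 1 := by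
  obtain ⟨p, hp⟩ := hint
  obtain ⟨c, hc, hpc⟩ := nhds_basis_closedBall.mem_iff.1 (mem_interior_iff_mem_nhds.1 hp)
  obtain ⟨κ, hκ, hκ0, hκ1⟩ := exists_schwartz_memBernstein_closedBall V hc
  have hk : MemBernstein Ω fun x => 𝐞 ⟪x, p⟫ • κ x := (hκ.modulate p).mono (by simpa using hpc)
  have hnorm (x : V) : ‖𝐞 ⟪x, p⟫ • κ x‖ = ‖κ x‖ := Circle.norm_smul _ _
  refine ⟨_, ⟨hk, fun x => (hnorm x).trans_le (hκ1 x)⟩,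
    (integrable_norm_iff hk.1.aestronglyMeasurable).1
      (by simpa only [hnorm] using κ.integrable.norm),
    squeeze_zero_norm (fun x => (hnorm x).le) (by simpa using (zero_at_infty κ).norm),
    by simp [hκ0]⟩

lemma exists_vanishing_mem_bernsteinUnitBall_near (hΩ : IsCompact Ω) (hconv : Convex ℝ Ω)
    (hint : (interior Ω).Nonempty) (hf : f ∈ bernsteinUnitBall Ω) (R : ℝ) {δ : ℝ} (hδ : 0 < δ) :
    ∃ h ∈ bernsteinUnitBall Ω, Tendsto h (cocompact V) (𝓝 0) ∧ h 0 = f 0 ∧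
      ∀ x, ‖x‖ ≤ R → ‖h x - f x‖ ≤ δ := by
  obtain ⟨k, ⟨hk, hk1⟩, hki, hklim, hk0⟩ := exists_integrable_vanishing_mem_bernsteinUnitBall hint
  obtain ⟨r, hr, hfr⟩ := exists_modulus_bernsteinUnitBall hΩ (half_pos hδ)
  obtain ⟨r', hr', hkr⟩ := Metric.continuous_iff.1 hk.1 0 (δ / 2) (half_pos hδ)
  obtain ⟨τ, hτR, hτ0, hτ1⟩ : ∃ τ : ℝ, τ * R < min r r' ∧ 0 < τ ∧ τ < 1 := by
    have hcont : Tendsto (· * R) (𝓝[>] (0 : ℝ)) (𝓝 0) := by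
      simpa using ((continuous_mul_const R).tendsto 0).mono_left nhdsWithin_le_nhds
    exact ((hcont.eventually_lt_const (lt_min hr hr')).and (Ioo_mem_nhdsGT one_pos)).exists
  have hh (x : V) : ‖f ((1 - τ) • x) * k (τ • x)‖ ≤ ‖k (τ • x)‖ :=
    (norm_mul _ _).trans_le (mul_le_of_le_one_left (norm_nonneg _) (hf.2 _))
  refine ⟨fun x => f ((1 - τ) • x) * k (τ • x), ⟨?_, fun x => (hh x).trans (hk1 _)⟩, ?_, ?_,
    fun x hx => ?_⟩
  · exact ((hf.1.comp_smul (sub_pos.2 hτ1).ne').mul (hk.comp_smul hτ0.ne')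
      (hki.comp_smul hτ0.ne') (hΩ.smul τ)).mono
      (convex_iff_pointwise_add_subset.1 hconv (sub_nonneg.2 hτ1.le) hτ0.le (by ring))
  · exact squeeze_zero_norm hh (by simpa using (hklim.comp
      (Homeomorph.smulOfNeZero τ hτ0.ne').isClosedEmbedding.tendsto_cocompact).norm)
  · simp [hk0]
  · have hτx : ‖τ • x‖ < min r r' := by
      rw [norm_smul, Real.norm_of_nonneg hτ0.le]
      exact (mul_le_mul_of_nonneg_left hx hτ0.le).trans_lt hτR
    have hfx : ‖f ((1 - τ) • x) - f x‖ ≤ δ / 2 := by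
      rw [← dist_eq_norm]
      refine (hfr f hf _ _ ?_).le
      simpa [dist_eq_norm, sub_smul] using hτx.trans_le (min_le_left _ _)
    have hkx : ‖k (τ • x) - 1‖ ≤ δ / 2 := by
      rw [← dist_eq_norm, ← hk0]
      exact (hkr _ (by simpa using hτx.trans_le (min_le_right _ _))).le
    calc ‖f ((1 - τ) • x) * k (τ • x) - f x‖
        = ‖f ((1 - τ) • x) * (k (τ • x) - 1) + (f ((1 - τ) • x) - f x)‖ := by ring_nf
      _ ≤ 1 * (δ / 2) + δ / 2 := by
        refine (norm_add_le _ _).trans (add_le_add ?_ hfx)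
        rw [norm_mul]
        exact mul_le_mul (hf.2 _) hkx (norm_nonneg _) zero_le_one
      _ = δ := by ring

/- Each further summand agrees with `f` where the previous sum is not yet negligible, so at any
point at most one of the `N` summands is neither negligible nor close to `f`. -/
lemma exists_vanishing_sum (hΩ : IsCompact Ω) (hconv : Convex ℝ Ω)
    (hint : (interior Ω).Nonempty) (hf : f ∈ bernsteinUnitBall Ω) {δ : ℝ} (hδ : 0 < δ) (N : ℕ) :
    ∃ S, MemBernstein Ω S ∧ Tendsto S (cocompact V) (𝓝 0) ∧ S 0 = N * f 0 ∧
      (∀ x, ‖S x‖ ≤ N) ∧ ∀ x, ‖S x‖ ≤ N * (‖f x‖ + δ) + 1 := by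
  induction N with
  | zero => exact ⟨_, MemBernstein.zero Ω, tendsto_const_nhds, by simp⟩
  | succ N ih =>
    obtain ⟨S, hS, hSlim, hS0, hSN, hSf⟩ := ih
    obtain ⟨R, hR⟩ := exists_norm_le_of_tendsto_cocompact hSlim hδ
    obtain ⟨h, hh, hhlim, hh0, hhf⟩ :=
      exists_vanishing_mem_bernsteinUnitBall_near hΩ hconv hint hf R hδ
    refine ⟨fun x => S x + h x, hS.add hh.1, by simpa using hSlim.add hhlim, ?_, fun x => ?_,
      fun x => (norm_add_le _ _).trans ?_⟩
    · simp only [hS0, hh0, Nat.cast_add_one, add_one_mul]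
    · rw [Nat.cast_add_one]
      exact (norm_add_le _ _).trans (add_le_add (hSN x) (hh.2 x))
    rw [Nat.cast_add_one]
    rcases le_or_gt R ‖x‖ with hx | hx
    · have := hR x hx
      have : 0 ≤ N * (‖f x‖ + δ) := by positivity
      linarith [hh.2 x, norm_nonneg (f x)]
    · linarith [hSf x, norm_le_norm_add_norm_sub' (h x) (f x), hhf x hx.le]

lemma exists_vanishing_mem_bernsteinUnitBall_le (hΩ : IsCompact Ω) (hconv : Convex ℝ Ω)
    (hint : (interior Ω).Nonempty) (hf : f ∈ bernsteinUnitBall Ω) {η : ℝ} (hη : 0 < η) :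
    ∃ h ∈ bernsteinUnitBall Ω, Tendsto h (cocompact V) (𝓝 0) ∧ h 0 = f 0 ∧
      ∀ x, ‖h x‖ ≤ ‖f x‖ + η := by
  obtain ⟨N, hN⟩ := exists_nat_gt (2 / η)
  have hN0 : (0 : ℝ) < N := (by positivity : 0 < 2 / η).trans hN
  obtain ⟨S, hS, hSlim, hS0, hSN, hSf⟩ := exists_vanishing_sum hΩ hconv hint hf (half_pos hη) N
  have hnorm (x : V) : ‖(N : ℂ)⁻¹ * S x‖ = ‖S x‖ / N := by
    rw [norm_mul, norm_inv, Complex.norm_natCast, inv_mul_eq_div]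
  refine ⟨fun x => (N : ℂ)⁻¹ * S x, ⟨hS.const_mul _, fun x => ?_⟩, by simpa using hSlim.const_mul _,
    ?_, fun x => ?_⟩
  · exact (hnorm x).trans_le (div_le_one_of_le₀ (hSN x) hN0.le)
  · have hNC : (N : ℂ) ≠ 0 := by exact_mod_cast hN0.ne'
    simp only [hS0, inv_mul_cancel_left₀ hNC]
  · rw [hnorm, div_le_iff₀ hN0]
    rw [div_lt_iff₀ hη] at hN
    linarith [hSf x]

end GlidingHump

section MainTheorem

lemma interior_nonempty_of_volume_pos {Ω : Set V} (hconv : Convex ℝ Ω) (hpos : 0 < volume Ω) :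
    (interior Ω).Nonempty := by
  by_contra! h
  have hfr := hconv.addHaar_frontier volume
  rw [frontier, h, Set.sdiff_empty] at hfr
  exact hpos.ne' (measure_mono_null subset_closure hfr)

lemma not_isSamplingSet_of_small_on {Ω P : Set V} (hΩ : IsCompact Ω) (hconv : Convex ℝ Ω)
    (hint : (interior Ω).Nonempty)
    (hsmall : ∀ ε > 0, ∃ f ∈ bernsteinUnitBall (cthickening ε Ω), (∃ x, 1 / 2 ≤ ‖f x‖) ∧
      ∀ p ∈ P, ‖f p‖ ≤ ε) : ¬ IsSamplingSet Ω P := by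
  rw [isSamplingSet_iff]
  rintro ⟨ε, hε, hsampling⟩
  have hδ (n : ℕ) : 0 < 1 / ((n : ℝ) + 1) := by positivity
  choose F hF hFhalf hFP using fun n => hsmall _ (hδ n)
  choose y hy using hFhalf
  obtain ⟨f, hf, φ, hφ, hlim⟩ := exists_subseq_tendsto_bernsteinUnitBall hΩ
    (F := fun n x => F n (x + y n)) (δ := fun n => 1 / ((n : ℝ) + 1))
    (fun m n hmn => one_div_le_one_div_of_le (by positivity) (by gcongr))
    tendsto_one_div_add_atTop_nhds_zero_nat
    fun n => comp_add_right_mem_bernsteinUnitBall (hF n) (y n)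
  have hf0 : 1 / 2 ≤ ‖f 0‖ :=
    ge_of_tendsto' ((hlim {0} isCompact_singleton).tendsto_at (Set.mem_singleton 0)).norm
      fun n => by simpa only [zero_add] using hy (φ n)
  obtain ⟨h, hh, hhlim, hh0, hhf⟩ :=
    exists_vanishing_mem_bernsteinUnitBall_le hΩ hconv hint hf (by positivity : 0 < ε / 4)
  obtain ⟨R, hR⟩ := exists_norm_le_of_tendsto_cocompact hhlim (half_pos hε)
  obtain ⟨n, hclose, hδn⟩ := (((Metric.tendstoUniformlyOn_iff.1
    (hlim _ (isCompact_closedBall 0 R))) (ε / 4) (by positivity)).and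
    ((tendsto_one_div_add_atTop_nhds_zero_nat.comp hφ.tendsto_atTop).eventually_lt_const
      (by positivity : 0 < ε / 8))).exists
  obtain ⟨p, hp, hhp⟩ := hsampling _
    (comp_add_right_mem_bernsteinUnitBall hh (-y (φ n))) ⟨y (φ n), by simpa [hh0] using hf0⟩
  rcases le_or_gt R ‖p + -y (φ n)‖ with hpR | hpR
  · linarith [hR _ hpR]
  · have hFf := hclose (p + -y (φ n)) (mem_closedBall_zero_iff.2 hpR.le)
    rw [neg_add_cancel_right, dist_eq_norm] at hFf
    have hFp := (hFP (φ n) p hp).trans_lt hδn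
    linarith [hhf (p + -y (φ n)), norm_le_norm_add_norm_sub' (f (p + -y (φ n))) (F (φ n) p)]

theorem concentric_circles_sampling_general [Nontrivial V] {Ω : Set V} (hΩ : IsCompact Ω)
    (hconv : Convex ℝ Ω) (hpos : 0 < volume Ω) {Q : Set ℝ} (hQpos : Q ⊆ Set.Ioi 0)
    (hQ : UniformlyDiscrete Q) :
    IsSamplingSet Ω (⋃ q ∈ Q, sphere (0 : V) q) ↔
      Metric.diam Ω < lowerUniformDensity (Q ∪ -Q) := by
  refine ⟨fun hsampling => ?_, isSamplingSet_of_diam_lt_lowerUniformDensity hΩ hQpos hQ⟩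
  have hint := interior_nonempty_of_volume_pos hconv hpos
  contrapose! hsampling with hd
  exact not_isSamplingSet_of_small_on hΩ hconv hint fun ε hε =>
    exists_mem_bernsteinUnitBall_small_on_spheres hΩ hconv (hint.mono interior_subset)
      hQpos hQ hd hε

end MainTheorem

end ConcentricSpheres

/-- Corollary (i), circles: the union of concentric circles `P = Q·𝕋` is a sampling set
for `B_Ω` iff `Diam(Ω) < d⁻(Q)`. -/
theorem concentric_circles_sampling
    (Ω : Set (EuclideanSpace ℝ (Fin 2))) (hΩcompact : IsCompact Ω) (hΩconvex : Convex ℝ Ω)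
    (hΩpos : 0 < volume Ω)
    (Q : Set ℝ) (hQpos : Q ⊆ Set.Ioi 0) (hQud : UniformlyDiscrete Q)
    (P : Set (EuclideanSpace ℝ (Fin 2)))
    (hP : P = ⋃ q ∈ Q, sphere (0 : EuclideanSpace ℝ (Fin 2)) q) :
    IsSamplingSet Ω P ↔ Metric.diam Ω < lowerUniformDensity (Q ∪ -Q) :=
  hP ▸ concentric_circles_sampling_general hΩcompact hΩconvex hΩpos hQpos hQud
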